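/- arXiv:1803.03369 — 2 statements merged into one kernel-verified Lean document; each statement's English description precedes it below -/
import Mathlib

section
/- Let n ≥ 1 be an integer and let α > 0. Then there exists a constant C > 0 such that for every Schwartz function f on ℝⁿ, ‖ sup_{R>0} |S_R^α f| ‖_{L²(ℝⁿ)} ≤ C ‖f‖_{L²(ℝⁿ)}, where S_R^α f(x) = ∫_{ℝⁿ} (1 − |ξ|²/R²)₊^α f̂(ξ) e^{2πi⟨x,ξ⟩} dξ. -/
open MeasureTheory Complex Filter
open scoped FourierTransform RealInnerProductSpace ENNReal Topology

/-- The Bochner–Riesz mean of order `α` at level `R` of a function `f` on `ℝⁿ`: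
`S_R^α f(x) = ∫ (1 - |ξ|²/R²)₊^α f̂(ξ) e^{2πi⟨x,ξ⟩} dξ`. -/
noncomputable def bochnerRiesz (n : ℕ) (α R : ℝ) (f : EuclideanSpace ℝ (Fin n) → ℂ)
    (x : EuclideanSpace ℝ (Fin n)) : ℂ :=
  ∫ ξ : EuclideanSpace ℝ (Fin n),
    (((max (1 - ‖ξ‖ ^ 2 / R ^ 2) 0) ^ (α : ℝ) : ℝ) : ℂ) * 𝓕 f ξ *
      Complex.exp (2 * Real.pi * Complex.I * (⟪x, ξ⟫ : ℝ))


namespace BR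

/-- Cauchy–Schwarz for lower Lebesgue integrals. -/
lemma cs {X : Type*} [MeasurableSpace X] (μ : Measure X) {f g : X → ℝ≥0∞}
    (hf : AEMeasurable f μ) (hg : AEMeasurable g μ) :
    (∫⁻ x, f x * g x ∂μ) ^ 2 ≤ (∫⁻ x, f x ^ 2 ∂μ) * (∫⁻ x, g x ^ 2 ∂μ) := by
  have h := ENNReal.lintegral_mul_le_Lp_mul_Lq μ Real.HolderConjugate.two_two hf hg
  have h2 := ENNReal.pow_le_pow_left (n := 2) h
  refine h2.trans (le_of_eq ?_)
  rw [mul_pow, ← ENNReal.rpow_natCast, ← ENNReal.rpow_natCast, ← ENNReal.rpow_mul,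
    ← ENNReal.rpow_mul]
  norm_num

variable {n : ℕ}

/-- The (dilated) Gaussian kernel. -/
noncomputable def gk (τ : ℝ) (y : EuclideanSpace ℝ (Fin n)) : ℝ≥0∞ :=
  ENNReal.ofReal ((Real.pi / τ) ^ ((n : ℝ) / 2) * Real.exp (-(Real.pi ^ 2 / τ) * ‖y‖ ^ 2))

lemma gk_meas (τ : ℝ) : Measurable (gk τ : EuclideanSpace ℝ (Fin n) → ℝ≥0∞) := by
  unfold gk
  fun_prop

lemma gk_even (τ : ℝ) (x y : EuclideanSpace ℝ (Fin n)) : gk τ (x - y) = gk τ (y - x) := by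
  unfold gk
  rw [norm_sub_rev]

lemma gk_lint {τ : ℝ} (hτ : 0 < τ) :
    ∫⁻ y : EuclideanSpace ℝ (Fin n), gk τ y = 1 := by
  have hb : 0 < Real.pi ^ 2 / τ := by positivity
  have h1 := GaussianFourier.integral_rexp_neg_mul_sq_norm (V := EuclideanSpace ℝ (Fin n)) hb
  have h2 : Integrable (fun y : EuclideanSpace ℝ (Fin n) =>
      Real.exp (-(Real.pi ^ 2 / τ) * ‖y‖ ^ 2)) := by
    by_contra hc
    rw [integral_undef hc] at h1
    have : 0 < (Real.pi / (Real.pi ^ 2 / τ)) ^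
      ((Module.finrank ℝ (EuclideanSpace ℝ (Fin n)) : ℝ) / 2) := by positivity
    linarith
  unfold gk
  rw [← ofReal_integral_eq_lintegral_ofReal (h2.const_mul _)
    (Eventually.of_forall fun y => by positivity), integral_const_mul, h1]
  rw [← ENNReal.ofReal_one]
  congr 1
  rw [finrank_euclideanSpace, Fintype.card_fin, ← Real.mul_rpow (by positivity) (by positivity)]
  have : Real.pi / τ * (Real.pi / (Real.pi ^ 2 / τ)) = 1 := by
    field_simp
  rw [this, Real.one_rpow]

/-- comparison constant -/
noncomputable def cn (n : ℕ) : ℝ := (4 : ℝ) ^ ((n : ℝ) / 2)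

lemma cn_pos : 0 < cn n := by unfold cn; positivity

lemma gk_cmp {t T : ℝ} (ht : 0 < t) (h1 : t ≤ T) (h2 : T ≤ 4 * t)
    (y : EuclideanSpace ℝ (Fin n)) : gk t y ≤ ENNReal.ofReal (cn n) * gk T y := by
  have hT : 0 < T := ht.trans_le h1
  unfold gk cn
  rw [← ENNReal.ofReal_mul (by positivity), ← mul_assoc,
    ← Real.mul_rpow (by positivity) (by positivity)]
  apply ENNReal.ofReal_le_ofReal
  gcongr
  rw [← mul_div_assoc, div_le_div_iff₀ ht hT]
  nlinarith [Real.pi_pos]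

lemma gk_conv_pt {s t : ℝ} (hs : 0 < s) (hst : s ≤ t) (x y z : EuclideanSpace ℝ (Fin n)) :
    gk s (y - x) * gk t (y - z) ≤
      (ENNReal.ofReal (cn n * cn n) * gk (4 * t) (x - z)) * gk (2 * s) (y - x) := by
  have ht : 0 < t := hs.trans_le hst
  have hc : (0:ℝ) ≤ cn n := cn_pos.le
  unfold gk
  rw [← ENNReal.ofReal_mul (by positivity), ← ENNReal.ofReal_mul (by positivity),
    ← ENNReal.ofReal_mul (by positivity)]
  apply ENNReal.ofReal_le_ofReal
  have e1 : (Real.pi / s) ^ ((n : ℝ) / 2) ≤ cn n * (Real.pi / (2 * s)) ^ ((n : ℝ) / 2) := by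
    unfold cn
    rw [← Real.mul_rpow (by positivity) (by positivity)]
    gcongr
    rw [← mul_div_assoc, div_le_div_iff₀ hs (by positivity)]
    nlinarith [Real.pi_pos, mul_pos Real.pi_pos hs]
  have e2 : (Real.pi / t) ^ ((n : ℝ) / 2) = cn n * (Real.pi / (4 * t)) ^ ((n : ℝ) / 2) := by
    unfold cn
    rw [← Real.mul_rpow (by positivity) (by positivity)]
    congr 1
    field_simp
  have e3 : Real.exp (-(Real.pi ^ 2 / s) * ‖y - x‖ ^ 2) *
      Real.exp (-(Real.pi ^ 2 / t) * ‖y - z‖ ^ 2) ≤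
      Real.exp (-(Real.pi ^ 2 / (4 * t)) * ‖x - z‖ ^ 2) *
      Real.exp (-(Real.pi ^ 2 / (2 * s)) * ‖y - x‖ ^ 2) := by
    rw [← Real.exp_add, ← Real.exp_add]
    apply Real.exp_le_exp.2
    have h1 : ‖x - z‖ ^ 2 ≤ 2 * ‖y - x‖ ^ 2 + 2 * ‖y - z‖ ^ 2 := by
      have : ‖x - z‖ ≤ ‖y - x‖ + ‖y - z‖ := by
        have := norm_sub_le (y - z) (y - x)
        rw [sub_sub_sub_cancel_left] at this
        linarith
      nlinarith [norm_nonneg (x - z), sq_nonneg (‖y - x‖ - ‖y - z‖), norm_nonneg (y - x),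
        norm_nonneg (y - z)]
    have h2 : Real.pi ^ 2 / (4 * t) * ‖x - z‖ ^ 2 ≤
      Real.pi ^ 2 / (4 * t) * (2 * ‖y - x‖ ^ 2 + 2 * ‖y - z‖ ^ 2) := by gcongr
    have h3 : Real.pi ^ 2 / t ≤ Real.pi ^ 2 / s := by gcongr
    have h4 : Real.pi ^ 2 / (4 * t) = (Real.pi ^ 2 / t) / 4 := by field_simp
    have h5 : Real.pi ^ 2 / (2 * s) = (Real.pi ^ 2 / s) / 2 := by field_simp
    rw [h4] at h2
    rw [h4, h5]
    have h6 := mul_le_mul_of_nonneg_right h3 (sq_nonneg ‖y - x‖)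
    have h7 : 0 ≤ Real.pi ^ 2 / t * ‖y - z‖ ^ 2 := by positivity
    nlinarith
  calc _ = ((Real.pi / s) ^ ((n : ℝ) / 2) * (Real.pi / t) ^ ((n : ℝ) / 2)) *
        (Real.exp (-(Real.pi ^ 2 / s) * ‖y - x‖ ^ 2) *
        Real.exp (-(Real.pi ^ 2 / t) * ‖y - z‖ ^ 2)) := by ring
    _ ≤ ((cn n * (Real.pi / (2 * s)) ^ ((n : ℝ) / 2)) *
          (cn n * (Real.pi / (4 * t)) ^ ((n : ℝ) / 2))) *
        (Real.exp (-(Real.pi ^ 2 / (4 * t)) * ‖x - z‖ ^ 2) *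
        Real.exp (-(Real.pi ^ 2 / (2 * s)) * ‖y - x‖ ^ 2)) := by
          rw [e2]
          gcongr
    _ = _ := by ring

lemma gk_conv {s t : ℝ} (hs : 0 < s) (hst : s ≤ t) (x z : EuclideanSpace ℝ (Fin n)) :
    ∫⁻ y, gk s (y - x) * gk t (y - z) ≤ ENNReal.ofReal (cn n * cn n) * gk (4 * t) (x - z) := by
  calc _ ≤ ∫⁻ y, (ENNReal.ofReal (cn n * cn n) * gk (4 * t) (x - z)) * gk (2 * s) (y - x) :=
        lintegral_mono fun y => gk_conv_pt hs hst x y z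
    _ = _ := by
        rw [lintegral_const_mul _ (show Measurable (fun y => gk (2 * s) (y - x)) from
            (gk_meas _).comp (measurable_id.sub_const x)),
          lintegral_sub_right_eq_self (fun y => gk (2 * s) y) x, gk_lint (by positivity), mul_one]

/-- Scale `4 ^ k` kernel. -/
noncomputable def gz (k : ℤ) (y : EuclideanSpace ℝ (Fin n)) : ℝ≥0∞ := gk ((4 : ℝ) ^ k) y

@[fun_prop]
lemma gz_meas (k : ℤ) : Measurable (gz k : EuclideanSpace ℝ (Fin n) → ℝ≥0∞) := gk_meas _

lemma gz_even (k : ℤ) (x y : EuclideanSpace ℝ (Fin n)) : gz k (x - y) = gz k (y - x) :=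
  gk_even _ _ _

lemma gz_lint (k : ℤ) : ∫⁻ y : EuclideanSpace ℝ (Fin n), gz k y = 1 := gk_lint (by positivity)

lemma gz_conv (j k : ℤ) (x z : EuclideanSpace ℝ (Fin n)) :
    ∫⁻ y, gz j (y - x) * gz k (y - z) ≤
      ENNReal.ofReal (cn n * cn n) * (gz (j + 1) (x - z) + gz (k + 1) (x - z)) := by
  have e : ∀ k : ℤ, (4 : ℝ) ^ (k + 1) = 4 * 4 ^ k := fun k => by
    rw [zpow_add₀ (by norm_num), zpow_one, mul_comm]
  rcases le_total j k with h | h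
  · refine (gk_conv (by positivity) (zpow_le_zpow_right₀ (by norm_num) h) x z).trans ?_
    gcongr
    rw [← e]
    exact le_add_self
  · have h1 := gk_conv (n := n) (s := 4 ^ k) (t := 4 ^ j) (by positivity)
      (zpow_le_zpow_right₀ (by norm_num) h) z x
    unfold gz
    simp_rw [mul_comm (gk ((4:ℝ) ^ j) _)]
    refine h1.trans ?_
    gcongr
    rw [← e, gk_even]
    exact le_self_add

/-- Convolution with the Gaussian kernel. -/
noncomputable def P (k : ℤ) (h : EuclideanSpace ℝ (Fin n) → ℝ≥0∞)
    (x : EuclideanSpace ℝ (Fin n)) : ℝ≥0∞ := ∫⁻ y, gz k (x - y) * h y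

@[fun_prop]
lemma P_meas (k : ℤ) {h : EuclideanSpace ℝ (Fin n) → ℝ≥0∞} (hh : Measurable h) :
    Measurable (P k h) := by
  unfold P
  apply Measurable.lintegral_prod_right'
    (f := fun p : EuclideanSpace ℝ (Fin n) × EuclideanSpace ℝ (Fin n) => gz k (p.1 - p.2) * h p.2)
  exact ((gz_meas k).comp (measurable_fst.sub measurable_snd)).mul (hh.comp measurable_snd)

lemma P_sum (k : ℤ) {ι : Type*} (S : Finset ι) {a : ι → EuclideanSpace ℝ (Fin n) → ℝ≥0∞}
    (ha : ∀ i, Measurable (a i)) (x : EuclideanSpace ℝ (Fin n)) :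
    P k (fun y => ∑ i ∈ S, a i y) x = ∑ i ∈ S, P k (a i) x := by
  unfold P
  simp_rw [Finset.mul_sum]
  rw [lintegral_finsetSum']
  intro i _
  exact (((gz_meas k).comp (measurable_const.sub measurable_id)).mul (ha i)).aemeasurable

lemma P_symm (k : ℤ) {a b : EuclideanSpace ℝ (Fin n) → ℝ≥0∞} (ha : Measurable a)
    (hb : Measurable b) : ∫⁻ x, a x * P k b x = ∫⁻ x, P k a x * b x := by
  have e1 : ∀ x, a x * P k b x = ∫⁻ y, a x * (gz k (x - y) * b y) := fun x => by
    rw [lintegral_const_mul]; rfl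
    exact ((gz_meas k).comp (measurable_const.sub measurable_id)).mul hb
  have e2 : ∀ y, P k a y * b y = ∫⁻ x, a x * (gz k (x - y) * b y) := fun y => by
    unfold P
    rw [← lintegral_mul_const]
    · refine lintegral_congr fun x => ?_
      rw [gz_even k y x]; ring
    exact ((gz_meas k).comp (measurable_const.sub measurable_id)).mul ha
  simp_rw [e1, e2]
  rw [lintegral_lintegral_swap]
  apply Measurable.aemeasurable
  exact (ha.comp measurable_fst).mul
    (((gz_meas k).comp (measurable_fst.sub measurable_snd)).mul (hb.comp measurable_snd))

lemma P_L2 (k : ℤ) {a : EuclideanSpace ℝ (Fin n) → ℝ≥0∞} (ha : Measurable a) :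
    ∫⁻ x, P k a x ^ 2 ≤ ∫⁻ x, a x ^ 2 := by
  have hg : ∀ x : EuclideanSpace ℝ (Fin n), Measurable fun y => gz k (x - y) := fun x =>
    (gz_meas k).comp (measurable_const.sub measurable_id)
  have h1 : ∀ x, P k a x ^ 2 ≤ P k (fun y => a y ^ 2) x := by
    intro x
    have h := cs volume (f := fun y => gz k (x - y) ^ (1 / 2 : ℝ))
      (g := fun y => gz k (x - y) ^ (1 / 2 : ℝ) * a y)
      ((hg x).pow_const _).aemeasurable (((hg x).pow_const _).mul ha).aemeasurable
    have e : ∀ y, (gz k (x - y) ^ (1 / 2 : ℝ)) ^ 2 = gz k (x - y) := fun y => by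
      rw [← ENNReal.rpow_natCast, ← ENNReal.rpow_mul]; norm_num
    simp_rw [← mul_assoc, mul_pow, ← sq, e] at h
    rw [lintegral_sub_left_eq_self (fun y => gz k y) x, gz_lint, one_mul] at h
    exact h
  refine (lintegral_mono h1).trans (le_of_eq ?_)
  have h2 := P_symm k (measurable_const (a := (1 : ℝ≥0∞))) (ha.pow_const 2)
  simp only [one_mul] at h2
  rw [h2]
  refine lintegral_congr fun x => ?_
  have : P k (fun _ => (1 : ℝ≥0∞)) x = 1 := by
    unfold P
    simp only [mul_one]
    rw [lintegral_sub_left_eq_self (fun y => gz k y) x, gz_lint]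
  rw [this, one_mul]

lemma P_inner (j k : ℤ) {a b : EuclideanSpace ℝ (Fin n) → ℝ≥0∞} (ha : Measurable a)
    (hb : Measurable b) : ∫⁻ y, P j a y * P k b y ≤
      ENNReal.ofReal (cn n * cn n) *
        ((∫⁻ x, P (j + 1) a x * b x) + ∫⁻ x, a x * P (k + 1) b x) := by
  -- move `P j` to the other side and compute the composed kernel
  have hg : ∀ (k : ℤ) (x : EuclideanSpace ℝ (Fin n)), Measurable fun y => gz k (x - y) :=
    fun k x => (gz_meas k).comp (measurable_const.sub measurable_id)
  have hg' : ∀ (k : ℤ) (x : EuclideanSpace ℝ (Fin n)), Measurable fun y => gz k (y - x) :=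
    fun k x => (gz_meas k).comp (measurable_id.sub measurable_const)
  rw [← P_symm j ha (P_meas k hb), ← P_symm (j + 1) ha hb]
  have h1 : ∀ x, P j (P k b) x ≤ ENNReal.ofReal (cn n * cn n) *
      (P (j + 1) b x + P (k + 1) b x) := by
    intro x
    have e1 : P j (P k b) x = ∫⁻ z, (∫⁻ y, gz j (y - x) * gz k (y - z)) * b z := by
      have e2 : P j (P k b) x = ∫⁻ y, ∫⁻ z, gz j (y - x) * gz k (y - z) * b z := by
        unfold P
        refine lintegral_congr fun y => ?_
        rw [← lintegral_const_mul, gz_even j x y]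
        · simp_rw [mul_assoc]
        · fun_prop
      rw [e2, lintegral_lintegral_swap]
      · refine lintegral_congr fun z => ?_
        rw [lintegral_mul_const]
        fun_prop
      apply Measurable.aemeasurable
      exact (((hg' j x).comp measurable_fst).mul
        ((gz_meas k).comp (measurable_fst.sub measurable_snd))).mul (hb.comp measurable_snd)
    rw [e1]
    calc _ ≤ ∫⁻ z, ENNReal.ofReal (cn n * cn n) *
          (gz (j + 1) (x - z) * b z + gz (k + 1) (x - z) * b z) := by
          refine lintegral_mono fun z => ?_
          rw [← add_mul, ← mul_assoc]
          gcongr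
          exact gz_conv j k x z
      _ = _ := by
          rw [lintegral_const_mul, lintegral_add_left]
          · rfl
          · fun_prop
          · fun_prop
  calc _ ≤ ∫⁻ x, ENNReal.ofReal (cn n * cn n) *
        (a x * P (j + 1) b x + a x * P (k + 1) b x) := by
        refine lintegral_mono fun x => ?_
        rw [← mul_add, mul_left_comm]
        gcongr
        exact h1 x
    _ = _ := by
        rw [lintegral_const_mul, lintegral_add_left]
        · fun_prop
        · fun_prop

end BR

namespace BR

variable {n : ℕ}

/-- composition constant -/
noncomputable def cc (n : ℕ) : ℝ≥0∞ := ENNReal.ofReal (cn n * cn n)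

lemma one_le_cn : 1 ≤ cn n := by
  unfold cn
  exact Real.one_le_rpow (by norm_num) (by positivity)

lemma one_le_cc : 1 ≤ cc n := by
  unfold cc
  rw [← ENNReal.ofReal_one]
  apply ENNReal.ofReal_le_ofReal
  nlinarith [one_le_cn (n := n)]

lemma fam_step {ι : Type*} (S : Finset ι) (τ : ι → ℤ)
    {a : ι → EuclideanSpace ℝ (Fin n) → ℝ≥0∞} (ha : ∀ i, Measurable (a i)) :
    (∫⁻ x, (∑ i ∈ S, P (τ i) (a i) x) ^ 2) ^ 2 ≤
      (2 * cc n) ^ 2 * ((∫⁻ x, (∑ i ∈ S, P (τ i + 1) (a i) x) ^ 2) *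
        ∫⁻ x, (∑ i ∈ S, a i x) ^ 2) := by
  have hP : ∀ (k : ℤ) i, Measurable (P k (a i)) := fun k i => P_meas k (ha i)
  have h1 : ∫⁻ x, (∑ i ∈ S, P (τ i) (a i) x) ^ 2 ≤
      2 * cc n * ∫⁻ x, (∑ i ∈ S, P (τ i + 1) (a i) x) * ∑ i ∈ S, a i x := by
    simp_rw [sq, Finset.sum_mul_sum]
    have e : ∀ (f : ι → ι → EuclideanSpace ℝ (Fin n) → ℝ≥0∞), (∀ i j, Measurable (f i j)) →
        ∫⁻ x, ∑ i ∈ S, ∑ j ∈ S, f i j x = ∑ i ∈ S, ∑ j ∈ S, ∫⁻ x, f i j x := by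
      intro f hf
      rw [lintegral_finsetSum _ (fun i _ => by fun_prop)]
      refine Finset.sum_congr rfl fun i _ => ?_
      rw [lintegral_finsetSum _ (fun i _ => by fun_prop)]
    rw [e (fun i j x => P (τ i) (a i) x * P (τ j) (a j) x)
      (fun i j => (hP _ i).mul (hP _ j)), e (fun i j x => P (τ i + 1) (a i) x * a j x)
      (fun i j => (hP _ i).mul (ha j))]
    calc _ ≤ ∑ i ∈ S, ∑ j ∈ S, cc n *
          ((∫⁻ x, P (τ i + 1) (a i) x * a j x) + ∫⁻ x, a i x * P (τ j + 1) (a j) x) :=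
          Finset.sum_le_sum fun i _ => Finset.sum_le_sum fun j _ =>
            P_inner (τ i) (τ j) (ha i) (ha j)
      _ = _ := by
          simp_rw [← Finset.mul_sum, Finset.sum_add_distrib]
          rw [Finset.sum_comm (f := fun i j => ∫⁻ x, a i x * P (τ j + 1) (a j) x)]
          simp_rw [mul_comm (a _ _)]
          ring
  refine (ENNReal.pow_le_pow_left (n := 2) h1).trans ?_
  rw [mul_pow]
  gcongr
  exact cs volume (Finset.measurable_fun_sum _ fun i _ => hP _ i).aemeasurable
    (Finset.measurable_fun_sum _ fun i _ => ha i).aemeasurable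

lemma sum_sq_le {ι : Type*} (S : Finset ι) (b : ι → ℝ≥0∞) :
    (∑ i ∈ S, b i) ^ 2 ≤ (S.card : ℝ≥0∞) * ∑ i ∈ S, b i ^ 2 := by
  have h := ENNReal.rpow_sum_le_const_mul_sum_rpow S b (p := 2) (by norm_num)
  norm_num at h
  exact_mod_cast h

lemma fam_apriori {ι : Type*} (S : Finset ι) (τ : ι → ℤ)
    {a : ι → EuclideanSpace ℝ (Fin n) → ℝ≥0∞} (ha : ∀ i, Measurable (a i)) :
    ∫⁻ x, (∑ i ∈ S, P (τ i) (a i) x) ^ 2 ≤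
      ((S.card ^ 2 : ℕ) : ℝ≥0∞) * ∫⁻ x, (∑ i ∈ S, a i x) ^ 2 := by
  have hP : ∀ (k : ℤ) i, Measurable (P k (a i)) := fun k i => P_meas k (ha i)
  calc _ ≤ ∫⁻ x, (S.card : ℝ≥0∞) * ∑ i ∈ S, P (τ i) (a i) x ^ 2 :=
        lintegral_mono fun x => sum_sq_le _ _
    _ = (S.card : ℝ≥0∞) * ∑ i ∈ S, ∫⁻ x, P (τ i) (a i) x ^ 2 := by
        rw [lintegral_const_mul _ (by fun_prop), lintegral_finsetSum _ (fun i _ => by fun_prop)]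
    _ ≤ (S.card : ℝ≥0∞) * ∑ i ∈ S, ∫⁻ x, (∑ i ∈ S, a i x) ^ 2 := by
        refine mul_le_mul_right (Finset.sum_le_sum fun i hi => ?_) _
        refine (P_L2 _ (ha i)).trans (lintegral_mono fun x => ?_)
        gcongr
        exact Finset.single_le_sum (f := fun i => a i x) (fun _ _ => zero_le) hi
    _ = _ := by
        rw [Finset.sum_const, nsmul_eq_mul]
        push_cast
        ring

lemma fam_bound {ι : Type*} (S : Finset ι) (τ : ι → ℤ)
    {a : ι → EuclideanSpace ℝ (Fin n) → ℝ≥0∞} (ha : ∀ i, Measurable (a i)) :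
    ∫⁻ x, (∑ i ∈ S, P (τ i) (a i) x) ^ 2 ≤
      8 * cc n ^ 2 * ∫⁻ x, (∑ i ∈ S, a i x) ^ 2 := by
  set m := S.card ^ 2 with hm
  have key : ∀ k ≤ m, ∀ τ : ι → ℤ, ∫⁻ x, (∑ i ∈ S, P (τ i) (a i) x) ^ 2 ≤
      4 * cc n ^ 2 * 2 ^ 2 ^ (m - k) * ∫⁻ x, (∑ i ∈ S, a i x) ^ 2 := by
    intro k
    induction k with
    | zero =>
      intro _ τ
      refine (fam_apriori S τ ha).trans ?_
      gcongr
      have h1 : ((m : ℕ) : ℝ≥0∞) ≤ 2 ^ 2 ^ m := by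
        have : m ≤ 2 ^ 2 ^ m := Nat.lt_two_pow_self.le.trans Nat.lt_two_pow_self.le
        exact_mod_cast this
      have h2 : (1 : ℝ≥0∞) ≤ 4 * cc n ^ 2 :=
        one_le_mul (by norm_num) (one_le_pow₀ one_le_cc)
      calc (m : ℝ≥0∞) ≤ 1 * 2 ^ 2 ^ m := by rw [one_mul]; exact h1
        _ ≤ _ := by rw [Nat.sub_zero]; gcongr
    | succ k ih =>
      intro hk τ
      have h1 := ih (by omega) (fun i => τ i + 1)
      have h2 := fam_step S τ ha
      rw [← ENNReal.pow_le_pow_left_iff (n := 2) (by norm_num)]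
      refine h2.trans ?_
      have e : m - k = (m - (k + 1)) + 1 := by omega
      rw [e] at h1
      calc _ ≤ (2 * cc n) ^ 2 * ((4 * cc n ^ 2 * 2 ^ 2 ^ (m - (k + 1) + 1) *
            ∫⁻ x, (∑ i ∈ S, a i x) ^ 2) * ∫⁻ x, (∑ i ∈ S, a i x) ^ 2) := by gcongr
        _ = _ := by
          rw [pow_succ 2 (m - (k+1)), pow_mul]
          ring
  have := key m le_rfl τ
  rw [Nat.sub_self] at this
  refine this.trans (le_of_eq ?_)
  ring

/-- Finite maximal function bound. -/
lemma max_fin (S : Finset ℤ) {h : EuclideanSpace ℝ (Fin n) → ℝ≥0∞} (hh : Measurable h) :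
    ∫⁻ x, (S.sup fun k => P k h x) ^ 2 ≤ 8 * cc n ^ 2 * ∫⁻ x, h x ^ 2 := by
  classical
  -- measurable weights realising the maximum
  have hw : ∃ w : ℤ → EuclideanSpace ℝ (Fin n) → ℝ≥0∞, (∀ k, Measurable (w k)) ∧
      (∀ x, ∑ k ∈ S, w k x ≤ 1) ∧
      ∀ x, (S.sup fun k => P k h x) = ∑ k ∈ S, w k x * P k h x := by
    induction S using Finset.induction_on with
    | empty => exact ⟨fun _ _ => 0, fun _ => measurable_const, by simp, by simp⟩
    | insert b S hb ih =>
      obtain ⟨w, hw1, hw2, hw3⟩ := ih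
      have hM : Measurable fun x => S.sup fun k => P k h x := by
        simp_rw [hw3]
        fun_prop
      set A : Set (EuclideanSpace ℝ (Fin n)) :=
        {x | (S.sup fun k => P k h x) < P b h x} with hA
      have hAm : MeasurableSet A := measurableSet_lt hM (P_meas b hh)
      refine ⟨fun k x => if k = b then A.indicator 1 x else Aᶜ.indicator (w k) x, ?_, ?_, ?_⟩
      · intro k
        by_cases hk : k = b
        · simp only [hk, if_true]; exact measurable_one.indicator hAm
        · simp only [hk, if_false]; exact (hw1 k).indicator hAm.compl
      · intro x
        rw [Finset.sum_insert hb]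
        have e : ∑ k ∈ S, (if k = b then A.indicator 1 x else Aᶜ.indicator (w k) x) =
            ∑ k ∈ S, Aᶜ.indicator (w k) x := by
          refine Finset.sum_congr rfl fun k hk => ?_
          rw [if_neg (fun hkb : k = b => hb (hkb ▸ hk))]
        rw [e]
        by_cases hx : x ∈ A
        · simp [hx]
        · simpa [hx] using hw2 x
      · intro x
        rw [Finset.sum_insert hb, Finset.sup_insert]
        have e : ∑ k ∈ S, (if k = b then A.indicator 1 x else Aᶜ.indicator (w k) x) * P k h x =
            ∑ k ∈ S, Aᶜ.indicator (w k) x * P k h x := by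
          refine Finset.sum_congr rfl fun k hk => ?_
          rw [if_neg (fun hkb : k = b => hb (hkb ▸ hk))]
        rw [e]
        by_cases hx : x ∈ A
        · have : (S.sup fun k => P k h x) < P b h x := hx
          simp [hx, this.le]
        · have : P b h x ≤ (S.sup fun k => P k h x) := not_lt.1 hx
          simp only [hx, not_false_eq_true, Set.indicator_of_notMem, if_true, zero_mul, zero_add,
            Set.mem_compl_iff, Set.indicator_of_mem]
          rw [sup_eq_right.2 this, hw3]
  by_cases hfin : ∫⁻ x, h x ^ 2 = ∞
  · rw [hfin, ENNReal.mul_top]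
    · exact le_top
    · have := one_le_cc (n := n)
      have h2 : cc n ≠ 0 := fun h => by rw [h] at this; norm_num at this
      positivity
  obtain ⟨w, hw1, hw2, hw3⟩ := hw
  simp_rw [hw3]
  set g : EuclideanSpace ℝ (Fin n) → ℝ≥0∞ := fun x => ∑ k ∈ S, w k x * P k h x with hg
  have hgm : Measurable g := by fun_prop
  change ∫⁻ x, g x ^ 2 ≤ _
  have hgfin : ∫⁻ x, g x ^ 2 ≠ ∞ := by
    have h1 : ∫⁻ x, g x ^ 2 ≤ (S.card : ℝ≥0∞) * ∑ k ∈ S, ∫⁻ x, h x ^ 2 := by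
      calc _ ≤ ∫⁻ x, (S.card : ℝ≥0∞) * ∑ k ∈ S, P k h x ^ 2 := by
            refine lintegral_mono fun x => ?_
            refine le_trans ?_ (sum_sq_le _ _)
            gcongr
            refine Finset.sum_le_sum fun k hk => ?_
            have : w k x ≤ 1 :=
              (Finset.single_le_sum (f := fun k => w k x) (fun _ _ => zero_le) hk).trans (hw2 x)
            calc _ ≤ 1 * P k h x := by gcongr
              _ = _ := one_mul _
        _ = (S.card : ℝ≥0∞) * ∑ k ∈ S, ∫⁻ x, P k h x ^ 2 := by
            rw [lintegral_const_mul _ (by fun_prop),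
              lintegral_finsetSum _ (fun i _ => by fun_prop)]
        _ ≤ _ := by
            exact mul_le_mul_right (Finset.sum_le_sum fun k _ => P_L2 k hh) _
    refine ne_top_of_le_ne_top ?_ h1
    rw [Finset.sum_const, nsmul_eq_mul]
    exact ENNReal.mul_ne_top (by simp) (ENNReal.mul_ne_top (by simp) hfin)
  have h1 : ∫⁻ x, g x ^ 2 = ∫⁻ x, (∑ k ∈ S, P k (fun y => w k y * g y) x) * h x := by
    calc _ = ∫⁻ x, ∑ k ∈ S, (w k x * g x) * P k h x := by
          refine lintegral_congr fun x => ?_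
          rw [sq]
          nth_rewrite 1 [hg]
          simp only
          rw [Finset.sum_mul]
          refine Finset.sum_congr rfl fun k _ => by ring
      _ = ∑ k ∈ S, ∫⁻ x, (w k x * g x) * P k h x :=
          lintegral_finsetSum _ (fun i _ => by fun_prop)
      _ = ∑ k ∈ S, ∫⁻ x, P k (fun y => w k y * g y) x * h x := by
          refine Finset.sum_congr rfl fun k _ => ?_
          exact P_symm k ((hw1 k).mul hgm) hh
      _ = _ := by
          rw [← lintegral_finsetSum _ (fun i _ => by fun_prop)]
          simp_rw [Finset.sum_mul]
  have h2 := cs volume (f := fun x => ∑ k ∈ S, P k (fun y => w k y * g y) x) (g := h)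
    (by fun_prop) hh.aemeasurable
  rw [← h1] at h2
  have h3 := fam_bound S id (a := fun k y => w k y * g y) (fun i => (hw1 i).mul hgm)
  simp only [id] at h3
  have h4 : ∫⁻ x, (∑ k ∈ S, w k x * g x) ^ 2 ≤ ∫⁻ x, g x ^ 2 := by
    refine lintegral_mono fun x => ?_
    rw [← Finset.sum_mul]
    gcongr
    calc _ ≤ 1 * g x := by gcongr; exact hw2 x
      _ = _ := one_mul _
  have h5 : (∫⁻ x, g x ^ 2) * (∫⁻ x, g x ^ 2) ≤
      (∫⁻ x, g x ^ 2) * (8 * cc n ^ 2 * ∫⁻ x, h x ^ 2) := by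
    rw [← sq]
    refine h2.trans ?_
    calc _ ≤ (8 * cc n ^ 2 * ∫⁻ x, g x ^ 2) * ∫⁻ x, h x ^ 2 := by
          gcongr
          refine h3.trans ?_
          gcongr
      _ = _ := by ring
  by_cases h0 : ∫⁻ x, g x ^ 2 = 0
  · rw [h0]; exact zero_le
  exact (ENNReal.mul_le_mul_iff_right h0 hgfin).1 h5

/-- Full lacunary maximal bound. -/
lemma max_all {h : EuclideanSpace ℝ (Fin n) → ℝ≥0∞} (hh : Measurable h) :
    ∫⁻ x, (⨆ k : ℤ, P k h x) ^ 2 ≤ 8 * cc n ^ 2 * ∫⁻ x, h x ^ 2 := by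
  have e : ∀ x, (⨆ k : ℤ, P k h x) ^ 2 =
      ⨆ N : ℕ, ((Finset.Icc (-(N : ℤ)) N).sup fun k => P k h x) ^ 2 := by
    intro x
    rw [← ENNReal.iSup_pow]
    congr 1
    apply le_antisymm
    · refine iSup_le fun k => ?_
      refine le_iSup_of_le k.natAbs ?_
      exact Finset.le_sup (f := fun k => P k h x) (Finset.mem_Icc.2 ⟨by omega, by omega⟩)
    · exact iSup_le fun N => Finset.sup_le fun k _ => le_iSup (fun k => P k h x) k
  simp_rw [e]
  rw [lintegral_iSup]
  · exact iSup_le fun N => max_fin _ hh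
  · intro N
    apply Measurable.pow_const
    simp_rw [Finset.sup_eq_iSup]
    exact Measurable.iSup fun k => Measurable.iSup fun _ => P_meas k hh
  · intro N M hNM x
    simp only
    gcongr

end BR

namespace BR

variable {n : ℕ}

lemma fourier_flip {f g : EuclideanSpace ℝ (Fin n) → ℂ} (hf : Integrable f) (hg : Integrable g) :
    ∫ ξ, 𝓕 f ξ * g ξ = ∫ x, f x * 𝓕 g x := by
  have := VectorFourier.integral_fourierIntegral_smul_eq_flip
    (L := innerₗ (EuclideanSpace ℝ (Fin n))) (μ := volume) (ν := volume)
    Real.continuous_fourierChar continuous_inner hf hg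
  simp only [flip_innerₗ, smul_eq_mul] at this
  exact this

lemma fourier_cont {f : EuclideanSpace ℝ (Fin n) → ℂ} (hf : Integrable f) :
    Continuous (𝓕 f) :=
  VectorFourier.fourierIntegral_continuous
    (L := innerₗ (EuclideanSpace ℝ (Fin n))) Real.continuous_fourierChar continuous_inner hf

lemma lint_sq_toLp {w : EuclideanSpace ℝ (Fin n) → ℂ} (h2 : MemLp w 2) :
    ∫⁻ x, ‖w x‖ₑ ^ 2 = ENNReal.ofReal (‖h2.toLp w‖ ^ 2) := by
  rw [Lp.norm_toLp, ← ENNReal.toReal_pow, ENNReal.ofReal_toReal (ENNReal.pow_ne_top h2.2.ne),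
    eLpNorm_eq_lintegral_rpow_enorm_toReal (by norm_num) (by norm_num), ← ENNReal.rpow_natCast,
    ← ENNReal.rpow_mul]
  norm_num

lemma planch {w : EuclideanSpace ℝ (Fin n) → ℂ} (h1 : Integrable w) (h2 : MemLp w 2) :
    ∫⁻ x, ‖𝓕 w x‖ₑ ^ 2 = ∫⁻ x, ‖w x‖ₑ ^ 2 := by
  set W : Lp ℂ 2 (volume : Measure (EuclideanSpace ℝ (Fin n))) := 𝓕 (h2.toLp w) with hW
  have hae : ∀ᵐ x, 𝓕 w x = W x := by
    apply ae_eq_of_integral_contDiff_smul_eq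
    · exact (fourier_cont h1).locallyIntegrable
    · exact (Lp.memLp W).locallyIntegrable (by norm_num)
    intro g hg hgs
    have hgc : HasCompactSupport (fun x => (g x : ℂ)) := hgs.comp_left (g := fun r : ℝ => (r : ℂ)) (by simp)
    have hgd : ContDiff ℝ (⊤ : ℕ∞) (fun x => (g x : ℂ)) := Complex.ofRealCLM.contDiff.comp hg
    set G := hgc.toSchwartzMap hgd with hG
    have hGx : ∀ x, G x = (g x : ℂ) := fun x => rfl
    have e1 := congrArg (fun T => T G) (Lp.fourier_toTemperedDistribution_eq (h2.toLp w))
    simp only [TemperedDistribution.fourier_apply, Lp.toTemperedDistribution_apply] at e1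
    have e2 : ∫ x, (𝓕 G) x • (h2.toLp w) x = ∫ x, 𝓕 G x * w x := by
      apply integral_congr_ae
      filter_upwards [h2.coeFn_toLp] with x hx
      rw [hx, smul_eq_mul]
    rw [e2, SchwartzMap.fourier_coe, fourier_flip G.integrable h1] at e1
    have e3 : ∫ x, g x • 𝓕 w x = ∫ x, G x * 𝓕 w x := by
      refine integral_congr_ae (Eventually.of_forall fun x => ?_)
      simp [hGx]
    have e4 : ∫ x, g x • W x = ∫ x, G x • W x := by
      refine integral_congr_ae (Eventually.of_forall fun x => ?_)
      simp [hGx]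
    rw [e3, e4, e1]
  have hWm : MemLp W 2 := Lp.memLp W
  have h3 : ∫⁻ x, ‖𝓕 w x‖ₑ ^ 2 = ∫⁻ x, ‖W x‖ₑ ^ 2 := by
    apply lintegral_congr_ae
    filter_upwards [hae] with x hx
    rw [hx]
  rw [h3, lint_sq_toLp hWm, lint_sq_toLp h2, Lp.toLp_coeFn, hW, Lp.norm_fourier_eq]

lemma planch_inv {w : EuclideanSpace ℝ (Fin n) → ℂ} (h1 : Integrable w) (h2 : MemLp w 2) :
    ∫⁻ x, ‖∫ ξ, w ξ * Complex.exp (2 * Real.pi * Complex.I * (⟪x, ξ⟫ : ℝ))‖ₑ ^ 2 =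
      ∫⁻ x, ‖w x‖ₑ ^ 2 := by
  have e : ∀ x, ∫ ξ, w ξ * Complex.exp (2 * Real.pi * Complex.I * (⟪x, ξ⟫ : ℝ)) = 𝓕 w (-x) := by
    intro x
    rw [Real.fourier_eq']
    refine integral_congr_ae (Eventually.of_forall fun ξ => ?_)
    simp only [smul_eq_mul]
    rw [mul_comm]
    congr 2
    rw [inner_neg_right, real_inner_comm]
    push_cast
    ring
  simp_rw [e]
  rw [← planch h1 h2]
  exact lintegral_neg_eq_self (μ := volume) (fun x => ‖𝓕 w x‖ₑ ^ 2)

lemma gauss_bound {f : EuclideanSpace ℝ (Fin n) → ℂ} (hf : Integrable f) {τ : ℝ} (hτ : 0 < τ)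
    (x : EuclideanSpace ℝ (Fin n)) :
    ‖∫ ξ, ((Real.exp (-τ * ‖ξ‖ ^ 2) : ℝ) : ℂ) * 𝓕 f ξ *
        Complex.exp (2 * Real.pi * Complex.I * (⟪x, ξ⟫ : ℝ))‖ₑ ≤
      ∫⁻ y, gk τ (x - y) * ‖f y‖ₑ := by
  have hτ' : 0 < (τ : ℂ).re := by simpa using hτ
  have e1 : ∫ ξ, ((Real.exp (-τ * ‖ξ‖ ^ 2) : ℝ) : ℂ) * 𝓕 f ξ *
        Complex.exp (2 * Real.pi * Complex.I * (⟪x, ξ⟫ : ℝ)) =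
      ∫ ξ, 𝓕 f ξ * Complex.exp (-(τ : ℂ) * ‖ξ‖ ^ 2 + 2 * Real.pi * Complex.I * (⟪x, ξ⟫ : ℝ)) := by
    refine integral_congr_ae (Eventually.of_forall fun ξ => ?_)
    simp only [Complex.exp_add]
    push_cast
    ring
  have hi := GaussianFourier.integrable_cexp_neg_mul_sq_norm_add hτ' (2 * Real.pi * Complex.I) x
  rw [e1, fourier_flip hf hi]
  refine (enorm_integral_le_lintegral_enorm _).trans (lintegral_mono fun y => ?_)
  rw [fourier_gaussian_innerProductSpace' hτ', enorm_mul, mul_comm]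
  gcongr
  unfold gk
  rw [← ofReal_norm]
  apply ENNReal.ofReal_le_ofReal
  apply le_of_eq
  have e2 : ((Real.pi : ℂ) / τ) ^ ((Module.finrank ℝ (EuclideanSpace ℝ (Fin n)) : ℂ) / 2) =
      (((Real.pi / τ) ^ ((n : ℝ) / 2) : ℝ) : ℂ) := by
    rw [finrank_euclideanSpace, Fintype.card_fin, Complex.ofReal_cpow (by positivity)]
    push_cast
    rfl
  have e3 : Complex.exp (-(Real.pi : ℂ) ^ 2 * ‖x - y‖ ^ 2 / τ) =
      ((Real.exp (-(Real.pi ^ 2 / τ) * ‖x - y‖ ^ 2) : ℝ) : ℂ) := by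
    push_cast
    congr 1
    ring
  rw [e2, e3, ← Complex.ofReal_mul, Complex.norm_real, Real.norm_of_nonneg (by positivity)]

lemma gauss_max {f : EuclideanSpace ℝ (Fin n) → ℂ} (hf : Integrable f) {τ : ℝ} (hτ : 0 < τ)
    (x : EuclideanSpace ℝ (Fin n)) :
    ‖∫ ξ, ((Real.exp (-τ * ‖ξ‖ ^ 2) : ℝ) : ℂ) * 𝓕 f ξ *
        Complex.exp (2 * Real.pi * Complex.I * (⟪x, ξ⟫ : ℝ))‖ₑ ≤
      ENNReal.ofReal (cn n) * ⨆ k : ℤ, P k (fun y => ‖f y‖ₑ) x := by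
  refine (gauss_bound hf hτ x).trans ?_
  obtain ⟨k, hk1, hk2⟩ := exists_mem_Ioc_zpow hτ (show (1 : ℝ) < 4 by norm_num)
  calc _ ≤ ∫⁻ y, ENNReal.ofReal (cn n) * (gz (k + 1) (x - y) * ‖f y‖ₑ) := by
        refine lintegral_mono fun y => ?_
        rw [← mul_assoc]
        gcongr
        apply gk_cmp hτ hk2
        rw [zpow_add₀ (by norm_num), zpow_one]
        linarith
    _ = ENNReal.ofReal (cn n) * P (k + 1) (fun y => ‖f y‖ₑ) x := by
        rw [lintegral_const_mul' _ _ (by simp)]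
        rfl
    _ ≤ _ := by
        gcongr
        exact le_iSup (fun k => P k (fun y => ‖f y‖ₑ) x) (k + 1)

end BR

namespace BR

/-- The truncated power `y₊ ^ γ`, equal to zero for `y ≤ 0` for every `γ`. -/
noncomputable def pw (γ y : ℝ) : ℝ := if 0 < y then y ^ γ else 0

@[fun_prop]
lemma pw_meas (γ : ℝ) : Measurable (pw γ) := by
  unfold pw
  exact Measurable.ite measurableSet_Ioi (by fun_prop) measurable_const

lemma pw_nonneg (γ y : ℝ) : 0 ≤ pw γ y := by
  unfold pw
  split_ifs <;> positivity

lemma pw_of_pos {γ y : ℝ} (hy : 0 < y) : pw γ y = y ^ γ := if_pos hy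

lemma pw_of_nonpos {γ y : ℝ} (hy : y ≤ 0) : pw γ y = 0 := if_neg hy.not_gt

lemma pw_eq_max {α : ℝ} (hα : 0 < α) (y : ℝ) : (max y 0) ^ α = pw α y := by
  rcases le_or_gt y 0 with h | h
  · rw [max_eq_right h, pw_of_nonpos h, Real.zero_rpow hα.ne']
  · rw [max_eq_left h.le, pw_of_pos h]

lemma pw_sq (γ y : ℝ) : pw γ y ^ 2 = pw (2 * γ) y := by
  rcases le_or_gt y 0 with h | h
  · rw [pw_of_nonpos h, pw_of_nonpos h]; norm_num
  · rw [pw_of_pos h, pw_of_pos h, mul_comm, Real.rpow_mul h.le]; norm_num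

lemma pw_mul {c : ℝ} (hc : 0 < c) (γ y : ℝ) : pw γ (c * y) = c ^ γ * pw γ y := by
  rcases le_or_gt y 0 with h | h
  · rw [pw_of_nonpos h, pw_of_nonpos (mul_nonpos_of_nonneg_of_nonpos hc.le h), mul_zero]
  · rw [pw_of_pos h, pw_of_pos (by positivity), Real.mul_rpow hc.le h.le]

/-- truncated power on the unit interval -/
noncomputable def ipw (p : ℝ) : ℝ → ℝ := (Set.Ioo (0 : ℝ) 1).indicator (pw p)

lemma ipw_nonneg (p y : ℝ) : 0 ≤ ipw p y := Set.indicator_nonneg (fun _ _ => pw_nonneg _ _) _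

lemma ipw_int {p : ℝ} (hp : -1 < p) : Integrable (ipw p) := by
  unfold ipw
  rw [integrable_indicator_iff measurableSet_Ioo]
  have h := (intervalIntegral.intervalIntegrable_rpow' (a := 0) (b := 1) hp)
  rw [intervalIntegrable_iff_integrableOn_Ioo_of_le (by norm_num)] at h
  refine h.congr_fun (fun x hx => ?_) measurableSet_Ioo
  exact (pw_of_pos hx.1).symm

/-- The symmetric beta weight. -/
noncomputable def bw (γ r : ℝ) : ℝ := pw γ r * pw γ (1 - r)

@[fun_prop]
lemma bw_meas (γ : ℝ) : Measurable (bw γ) := by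
  unfold bw
  fun_prop

lemma bw_nonneg (γ r : ℝ) : 0 ≤ bw γ r := mul_nonneg (pw_nonneg _ _) (pw_nonneg _ _)

lemma bw_zero {γ r : ℝ} (hr : r ∉ Set.Ioo (0 : ℝ) 1) : bw γ r = 0 := by
  unfold bw
  by_cases h : 0 < r
  · have : 1 - r ≤ 0 := by
      by_contra hc
      exact hr ⟨h, by linarith⟩
    rw [pw_of_nonpos this, mul_zero]
  · rw [pw_of_nonpos (not_lt.1 h), zero_mul]

lemma bw_int {γ : ℝ} (hγ : -1 / 2 < γ) : Integrable (bw γ) := by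
  have h1 := ipw_int (p := 2 * γ) (by linarith)
  have h2 := h1.comp_sub_left 1
  refine (h1.add h2).mono' (bw_meas γ).aestronglyMeasurable (Eventually.of_forall fun r => ?_)
  rw [Real.norm_of_nonneg (bw_nonneg _ _)]
  by_cases hr : r ∈ Set.Ioo (0 : ℝ) 1
  · have hr' : 1 - r ∈ Set.Ioo (0 : ℝ) 1 := ⟨by linarith [hr.2], by linarith [hr.1]⟩
    simp only [Pi.add_apply, ipw]
    rw [Set.indicator_of_mem hr, Set.indicator_of_mem hr', ← pw_sq, ← pw_sq, bw]
    nlinarith [sq_nonneg (pw γ r - pw γ (1 - r)), pw_nonneg γ r, pw_nonneg γ (1 - r)]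
  · rw [bw_zero hr]
    exact add_nonneg (ipw_nonneg _ _) (ipw_nonneg _ _)

/-- The beta constant. -/
noncomputable def bB (γ : ℝ) : ℝ := ∫ r, bw γ r

lemma bB_pos {γ : ℝ} (hγ : -1 / 2 < γ) : 0 < bB γ := by
  unfold bB
  rw [integral_pos_iff_support_of_nonneg (bw_nonneg γ) (bw_int hγ)]
  refine lt_of_lt_of_le ?_ (measure_mono (s := Set.Ioo (0 : ℝ) 1) ?_)
  · simp
  · intro r hr
    have h1 : 0 < 1 - r := by linarith [hr.2]
    have h0 := hr.1
    simp only [Function.mem_support, bw, pw_of_pos hr.1, pw_of_pos h1]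
    positivity

lemma beta_pt {γ s : ℝ} (hs : 0 ≤ s) (r : ℝ) :
    bw γ r * pw γ (1 - s / r) = pw γ (1 - r) * pw γ (r - s) := by
  unfold bw
  by_cases h : 0 < r
  · have : r - s = r * (1 - s / r) := by field_simp
    rw [this, pw_mul h, pw_of_pos h]
    ring
  · rw [pw_of_nonpos (not_lt.1 h), pw_of_nonpos (show r - s ≤ 0 by linarith [not_lt.1 h])]
    ring

lemma beta_pt2 {γ s : ℝ} (hs : s < 1) (r : ℝ) :
    pw γ (1 - r) * pw γ (r - s) = (1 - s) ^ (2 * γ) * bw γ ((r - s) / (1 - s)) := by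
  have h : 0 < 1 - s := by linarith
  have e1 : r - s = (1 - s) * ((r - s) / (1 - s)) := by field_simp
  have e2 : 1 - r = (1 - s) * (1 - (r - s) / (1 - s)) := by field_simp; ring
  rw [e2]
  nth_rewrite 2 [e1]
  rw [pw_mul h, pw_mul h, bw, mul_comm 2 γ, Real.rpow_mul h.le]
  have : ((1 - s) ^ γ) ^ (2 : ℝ) = (1 - s) ^ γ * (1 - s) ^ γ := by
    rw [Real.rpow_two, sq]
  rw [this]
  ring

lemma beta_pt3 {γ s : ℝ} (hs : 1 ≤ s) (r : ℝ) : pw γ (1 - r) * pw γ (r - s) = 0 := by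
  rcases le_or_gt r 1 with h | h
  · rw [pw_of_nonpos (show r - s ≤ 0 by linarith), mul_zero]
  · rw [pw_of_nonpos (show 1 - r ≤ 0 by linarith), zero_mul]

lemma beta_int {γ s : ℝ} (hγ : -1 / 2 < γ) (hs : 0 ≤ s) :
    Integrable (fun r => bw γ r * pw γ (1 - s / r)) := by
  simp_rw [beta_pt hs]
  rcases lt_or_ge s 1 with h | h
  · simp_rw [beta_pt2 h]
    apply Integrable.const_mul
    have h1 := (bw_int hγ).comp_div (show 1 - s ≠ 0 by linarith)
    exact h1.comp_sub_right s
  · simp_rw [beta_pt3 h]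
    exact integrable_zero _ _ _

lemma beta_eq {γ s : ℝ} (hs : 0 ≤ s) :
    ∫ r, bw γ r * pw γ (1 - s / r) = bB γ * pw (2 * γ + 1) (1 - s) := by
  simp_rw [beta_pt hs]
  rcases lt_or_ge s 1 with h | h
  · have h' : 0 < 1 - s := by linarith
    simp_rw [beta_pt2 h]
    rw [integral_const_mul, integral_sub_right_eq_self (fun r => bw γ (r / (1 - s))) s,
      Measure.integral_comp_div, abs_of_pos h', pw_of_pos h', Real.rpow_add h', Real.rpow_one,
      smul_eq_mul, bB]
    ring
  · simp_rw [beta_pt3 h]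
    rw [pw_of_nonpos (by linarith)]
    simp

lemma haar_scale (φ : ℝ → ℝ≥0∞) {u : ℝ} (hu : 0 < u) :
    ∫⁻ r in Set.Ioi (0 : ℝ), φ (u * r) * ENNReal.ofReal (1 / r) =
      ∫⁻ v in Set.Ioi (0 : ℝ), φ v * ENNReal.ofReal (1 / v) := by
  have h := lintegral_image_eq_lintegral_abs_deriv_mul (s := Set.Ioi (0 : ℝ))
    (f := fun r => u * r) (f' := fun _ => u) measurableSet_Ioi
    (fun x _ => by simpa using ((hasDerivAt_id x).const_mul u).hasDerivWithinAt)
    (fun x _ y _ hxy => mul_left_cancel₀ hu.ne' hxy) (fun v => φ v * ENNReal.ofReal (1 / v))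
  have him : (fun r => u * r) '' Set.Ioi (0 : ℝ) = Set.Ioi 0 := by
    rw [Set.image_mul_left_Ioi hu, mul_zero]
  rw [him] at h
  rw [h]
  refine setLIntegral_congr_fun measurableSet_Ioi fun r hr => ?_
  have hr : 0 < r := hr
  rw [abs_of_pos hu, mul_left_comm, ← ENNReal.ofReal_mul hu.le]
  congr 2
  field_simp

lemma weight_fin {γ : ℝ} (hγ : -1 / 2 < γ) :
    ∫⁻ r in Set.Ioi (0 : ℝ), ENNReal.ofReal (bw γ r ^ 2 * r) < ∞ := by
  have h1 := (ipw_int (p := 2 * γ) (by linarith)).comp_sub_left 1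
  refine lt_of_le_of_lt ?_ h1.lintegral_lt_top
  refine (setLIntegral_le_lintegral _ _).trans (lintegral_mono fun r => ?_)
  apply ENNReal.ofReal_le_ofReal
  by_cases hr : r ∈ Set.Ioo (0 : ℝ) 1
  · have hr' : 1 - r ∈ Set.Ioo (0 : ℝ) 1 := ⟨by linarith [hr.2], by linarith [hr.1]⟩
    rw [ipw, Set.indicator_of_mem hr', bw, mul_pow, pw_sq, pw_sq, pw_of_pos hr.1]
    have h2 : r ^ (2 * γ) * r ≤ 1 := by
      have : r ^ (2 * γ) * r = r ^ (2 * γ + 1) := by rw [Real.rpow_add hr.1, Real.rpow_one]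
      rw [this]
      exact Real.rpow_le_one hr.1.le hr.2.le (by linarith)
    nlinarith [pw_nonneg (2 * γ) (1 - r)]
  · rw [bw_zero hr]
    simpa using ipw_nonneg _ _

/-- The difference of multipliers. -/
noncomputable def dd (γ s : ℝ) : ℝ := pw γ (1 - s) - Real.exp (-s)

@[fun_prop]
lemma dd_meas (γ : ℝ) : Measurable (dd γ) := by
  unfold dd
  fun_prop

lemma dd_zero (γ : ℝ) : dd γ 0 = 0 := by
  simp [dd, pw]

lemma dd_lip (γ : ℝ) : ∃ K : ℝ, ∀ s ∈ Set.Icc (0 : ℝ) (1 / 2), |dd γ s| ≤ K * s := by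
  have h : ContDiffOn ℝ 1 (fun s : ℝ => (1 - s) ^ γ - Real.exp (-s)) (Set.Icc 0 (1 / 2)) := by
    apply ContDiffOn.sub
    · apply ContDiffOn.rpow_const_of_ne (by fun_prop)
      intro x hx
      have := hx.2
      linarith
    · fun_prop
  obtain ⟨K, hK⟩ := h.exists_lipschitzOnWith (by norm_num) (convex_Icc _ _) isCompact_Icc
  refine ⟨K, fun s hs => ?_⟩
  have h1 := hK.dist_le_mul s hs 0 ⟨le_rfl, by norm_num⟩
  rw [Real.dist_eq, Real.dist_eq] at h1
  have h2 : 0 < 1 - s := by linarith [hs.2]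
  simp only [sub_zero, Real.one_rpow, neg_zero, Real.exp_zero, sub_self, abs_of_nonneg hs.1] at h1
  rw [dd, pw_of_pos h2]
  exact h1

lemma dd_fin {γ : ℝ} (hγ : -1 / 2 < γ) :
    ∫⁻ r in Set.Ioi (0 : ℝ), ENNReal.ofReal (dd γ (1 / r) ^ 2) * ENNReal.ofReal (1 / r) < ∞ := by
  obtain ⟨K, hK⟩ := dd_lip γ
  have i1 : IntegrableOn (fun r : ℝ => 4 * ipw (2 * γ) (r - 1) + 6) (Set.Ioc 0 2) := by
    apply Integrable.add
    · exact (((ipw_int (p := 2 * γ) (by linarith)).comp_sub_right 1).const_mul 4).integrableOn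
    · exact integrableOn_const (by simp)
  have i2 : IntegrableOn (fun r : ℝ => K ^ 2 * r ^ (-3 : ℝ)) (Set.Ioi 2) :=
    (integrableOn_Ioi_rpow_of_lt (by norm_num) (by norm_num)).const_mul _
  have hu : Set.Ioi (0 : ℝ) = Set.Ioc 0 2 ∪ Set.Ioi 2 := (Set.Ioc_union_Ioi_eq_Ioi (by norm_num)).symm
  rw [hu]
  refine (lintegral_union_le _ _ _).trans_lt (ENNReal.add_lt_top.2 ⟨?_, ?_⟩)
  · refine lt_of_le_of_lt ?_ i1.lintegral_lt_top
    refine setLIntegral_mono' measurableSet_Ioc fun r hr => ?_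
    have hr0 : 0 < r := hr.1
    rw [← ENNReal.ofReal_mul (sq_nonneg _)]
    apply ENNReal.ofReal_le_ofReal
    have hi := ipw_nonneg (2 * γ) (r - 1)
    rcases le_or_gt r 1 with h1 | h1
    · have h2 : 1 - 1 / r ≤ 0 := by
        rw [sub_nonpos, le_div_iff₀ hr0]; linarith
      have h3 : Real.exp (-(1 / r)) ≤ r := by
        rw [Real.exp_neg, inv_le_comm₀ (Real.exp_pos _) hr0]
        have := Real.add_one_le_exp (1 / r)
        rw [one_div] at this ⊢
        linarith
      rw [dd, pw_of_nonpos h2]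
      have h4 : (0 - Real.exp (-(1 / r))) ^ 2 * (1 / r) ≤ r := by
        rw [mul_one_div, div_le_iff₀ hr0]
        nlinarith [Real.exp_pos (-(1 / r))]
      linarith
    · have h2 : 0 < 1 - 1 / r := by
        rw [sub_pos, div_lt_one hr0]; exact h1
      have h3 : 1 / r ≤ 1 := by rw [div_le_one hr0]; exact h1.le
      have h3' : 0 < 1 / r := by positivity
      have he : Real.exp (-(1 / r)) ≤ 1 := Real.exp_le_one_iff.2 (by linarith)
      have he' := Real.exp_pos (-(1 / r))
      have h5 : dd γ (1 / r) ^ 2 ≤ 2 * pw (2 * γ) (1 - 1 / r) + 2 := by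
        rw [← pw_sq, dd]
        nlinarith [sq_nonneg (pw γ (1 - 1 / r) + Real.exp (-(1 / r)))]
      have h6 : pw (2 * γ) (1 - 1 / r) ≤ 2 * ipw (2 * γ) (r - 1) ∨ r = 2 := by
        rcases eq_or_lt_of_le hr.2 with h | h
        · exact Or.inr h
        left
        have hm : r - 1 ∈ Set.Ioo (0 : ℝ) 1 := ⟨by linarith, by linarith⟩
        rw [ipw, Set.indicator_of_mem hm]
        have e : r - 1 = r * (1 - 1 / r) := by field_simp
        rw [e, pw_mul hr0]
        have h7 : 1 ≤ 2 * r ^ (2 * γ) := by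
          have : r ^ (-1 : ℝ) ≤ r ^ (2 * γ) :=
            Real.rpow_le_rpow_of_exponent_le h1.le (by linarith)
          rw [Real.rpow_neg_one] at this
          have h8 : (2 : ℝ)⁻¹ ≤ r⁻¹ := by gcongr
          linarith
        nlinarith [pw_nonneg (2 * γ) (1 - 1 / r)]
      have h9 : dd γ (1 / r) ^ 2 * (1 / r) ≤ dd γ (1 / r) ^ 2 := by
        nlinarith [sq_nonneg (dd γ (1 / r))]
      rcases h6 with h6 | h6
      · linarith
      · have h10 : pw (2 * γ) (1 - 1 / r) ≤ 2 := by
          rw [h6, pw_of_pos (by norm_num)]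
          have : (1 - 1 / 2 : ℝ) ^ (2 * γ) ≤ (1 - 1 / 2 : ℝ) ^ (-1 : ℝ) :=
            Real.rpow_le_rpow_of_exponent_ge (by norm_num) (by norm_num) (by linarith)
          refine this.trans ?_
          rw [Real.rpow_neg_one]
          norm_num
        linarith
  · refine lt_of_le_of_lt ?_ i2.lintegral_lt_top
    refine setLIntegral_mono' measurableSet_Ioi fun r hr => ?_
    have hr2 : 2 < r := hr
    have hr0 : 0 < r := by linarith
    rw [← ENNReal.ofReal_mul (sq_nonneg _)]
    apply ENNReal.ofReal_le_ofReal
    have h1 := hK (1 / r) ⟨by positivity, by gcongr⟩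
    have h2 : dd γ (1 / r) ^ 2 ≤ (K * (1 / r)) ^ 2 := by
      rw [← sq_abs]
      gcongr
    have h3 : r ^ (-3 : ℝ) = (1 / r) ^ 2 * (1 / r) := by
      rw [Real.rpow_neg hr0.le]
      have : r ^ (3 : ℝ) = r ^ 3 := by exact_mod_cast Real.rpow_natCast r 3
      rw [this]
      field_simp
    rw [h3, ← mul_assoc, ← mul_pow]
    gcongr

/-- The square function constant. -/
noncomputable def kK (γ : ℝ) : ℝ≥0∞ :=
  ∫⁻ r in Set.Ioi (0 : ℝ), ENNReal.ofReal (dd γ (1 / r) ^ 2) * ENNReal.ofReal (1 / r)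

lemma dd_scale (γ : ℝ) {l : ℝ} (hl : 0 ≤ l) :
    ∫⁻ v in Set.Ioi (0 : ℝ), ENNReal.ofReal (dd γ (l / v) ^ 2) * ENNReal.ofReal (1 / v) ≤ kK γ := by
  rcases eq_or_lt_of_le hl with h | h
  · subst h
    simp [dd_zero]
  · rw [← haar_scale (fun v => ENNReal.ofReal (dd γ (l / v) ^ 2)) h, kK]
    apply le_of_eq
    refine setLIntegral_congr_fun measurableSet_Ioi fun r hr => ?_
    have hr : 0 < r := hr
    have : l / (l * r) = 1 / r := by field_simp
    simp only [this]

end BR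

namespace BR

lemma subord {n : ℕ} {γ u : ℝ} (hγ : -1 / 2 < γ) (hu : 0 < u)
    {w : EuclideanSpace ℝ (Fin n) → ℂ} (hw : Integrable w) :
    (bB γ : ℂ) * ∫ ξ, ((pw (2 * γ + 1) (1 - ‖ξ‖ ^ 2 / u) : ℝ) : ℂ) * w ξ =
      (∫ r, ((bw γ r : ℝ) : ℂ) * ∫ ξ, ((dd γ (‖ξ‖ ^ 2 / (u * r)) : ℝ) : ℂ) * w ξ) +
      ∫ r, ((bw γ r : ℝ) : ℂ) * ∫ ξ, ((Real.exp (-(‖ξ‖ ^ 2 / (u * r))) : ℝ) : ℂ) * w ξ := by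
  have m1 : Measurable (fun p : ℝ × EuclideanSpace ℝ (Fin n) =>
      bw γ p.1 * pw γ (1 - ‖p.2‖ ^ 2 / (u * p.1))) := by fun_prop
  have m2 : Measurable (fun p : ℝ × EuclideanSpace ℝ (Fin n) =>
      bw γ p.1 * Real.exp (-(‖p.2‖ ^ 2 / (u * p.1)))) := by fun_prop
  have hw2 : AEStronglyMeasurable (fun p : ℝ × EuclideanSpace ℝ (Fin n) => w p.2)
      ((volume : Measure ℝ).prod volume) := hw.1.comp_snd
  have hdiv : ∀ (ξ : EuclideanSpace ℝ (Fin n)) (r : ℝ), ‖ξ‖ ^ 2 / (u * r) = (‖ξ‖ ^ 2 / u) / r :=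
    fun ξ r => by rw [div_div]
  have i1 : Integrable (fun p : ℝ × EuclideanSpace ℝ (Fin n) =>
      ((bw γ p.1 * pw γ (1 - ‖p.2‖ ^ 2 / (u * p.1)) : ℝ) : ℂ) * w p.2)
      ((volume : Measure ℝ).prod volume) := by
    have m3 : AEStronglyMeasurable (fun p : ℝ × EuclideanSpace ℝ (Fin n) =>
        ((bw γ p.1 * pw γ (1 - ‖p.2‖ ^ 2 / (u * p.1)) : ℝ) : ℂ) * w p.2)
        ((volume : Measure ℝ).prod volume) :=
      (measurable_ofReal.comp m1).aestronglyMeasurable.mul hw2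
    rw [integrable_prod_iff' m3]
    constructor
    · refine Eventually.of_forall fun ξ => ?_
      simp only [hdiv]
      exact ((beta_int hγ (s := ‖ξ‖ ^ 2 / u) (by positivity)).ofReal).mul_const _
    · have : ∀ ξ : EuclideanSpace ℝ (Fin n),
          ∫ r, ‖((bw γ r * pw γ (1 - ‖ξ‖ ^ 2 / (u * r)) : ℝ) : ℂ) * w ξ‖ =
            bB γ * pw (2 * γ + 1) (1 - ‖ξ‖ ^ 2 / u) * ‖w ξ‖ := by
        intro ξ
        rw [← beta_eq (s := ‖ξ‖ ^ 2 / u) (by positivity), ← integral_mul_const]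
        congr 1
        ext r
        rw [norm_mul, Complex.norm_real, Real.norm_of_nonneg
          (mul_nonneg (bw_nonneg _ _) (pw_nonneg _ _)), hdiv]
      simp only [this]
      refine (hw.norm.const_mul (bB γ)).mono' ?_ (Eventually.of_forall fun ξ => ?_)
      · exact Measurable.aestronglyMeasurable (by fun_prop) |>.mul hw.1.norm
      · have hB := (bB_pos hγ).le
        have h1 : pw (2 * γ + 1) (1 - ‖ξ‖ ^ 2 / u) ≤ 1 := by
          have h0 : 0 ≤ ‖ξ‖ ^ 2 / u := by positivity
          rcases le_or_gt (1 - ‖ξ‖ ^ 2 / u) 0 with h | h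
          · rw [pw_of_nonpos h]; exact zero_le_one
          · rw [pw_of_pos h]
            exact Real.rpow_le_one h.le (by linarith) (by linarith)
        have h2 := pw_nonneg (2 * γ + 1) (1 - ‖ξ‖ ^ 2 / u)
        rw [Real.norm_of_nonneg (by positivity)]
        gcongr
        nlinarith
  have i2 : Integrable (fun p : ℝ × EuclideanSpace ℝ (Fin n) =>
      ((bw γ p.1 * Real.exp (-(‖p.2‖ ^ 2 / (u * p.1))) : ℝ) : ℂ) * w p.2)
      ((volume : Measure ℝ).prod volume) := by
    have h := (bw_int hγ).mul_prod hw.norm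
    refine h.mono' ((measurable_ofReal.comp m2).aestronglyMeasurable.mul hw2)
      (Eventually.of_forall fun p => ?_)
    rw [norm_mul, Complex.norm_real, Real.norm_of_nonneg
      (mul_nonneg (bw_nonneg _ _) (Real.exp_pos _).le)]
    gcongr
    by_cases hr : p.1 ∈ Set.Ioo (0 : ℝ) 1
    · have h1 : 0 < p.1 := hr.1
      have : Real.exp (-(‖p.2‖ ^ 2 / (u * p.1))) ≤ 1 :=
        Real.exp_le_one_iff.2 (by rw [neg_nonpos]; positivity)
      nlinarith [bw_nonneg γ p.1]
    · rw [bw_zero hr, zero_mul]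
  have i3 := i1.sub i2
  have e1 : (bB γ : ℂ) * ∫ ξ, ((pw (2 * γ + 1) (1 - ‖ξ‖ ^ 2 / u) : ℝ) : ℂ) * w ξ =
      ∫ ξ, ∫ r, ((bw γ r * pw γ (1 - ‖ξ‖ ^ 2 / (u * r)) : ℝ) : ℂ) * w ξ := by
    rw [← integral_const_mul]
    congr 1
    ext ξ
    rw [integral_mul_const, integral_complex_ofReal]
    simp only [hdiv]
    rw [beta_eq (by positivity)]
    push_cast
    ring
  rw [e1, ← integral_integral_swap (f := fun r ξ =>
    ((bw γ r * pw γ (1 - ‖ξ‖ ^ 2 / (u * r)) : ℝ) : ℂ) * w ξ) i1]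
  have e2 : ∀ r, ((bw γ r : ℝ) : ℂ) * ∫ ξ, ((dd γ (‖ξ‖ ^ 2 / (u * r)) : ℝ) : ℂ) * w ξ =
      ∫ ξ, (((bw γ r * pw γ (1 - ‖ξ‖ ^ 2 / (u * r)) : ℝ) : ℂ) * w ξ -
        ((bw γ r * Real.exp (-(‖ξ‖ ^ 2 / (u * r))) : ℝ) : ℂ) * w ξ) := by
    intro r
    rw [← integral_const_mul]
    congr 1
    ext ξ
    rw [dd]
    push_cast
    ring
  have e3 : ∀ r, ((bw γ r : ℝ) : ℂ) *
      ∫ ξ, ((Real.exp (-(‖ξ‖ ^ 2 / (u * r))) : ℝ) : ℂ) * w ξ =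
      ∫ ξ, ((bw γ r * Real.exp (-(‖ξ‖ ^ 2 / (u * r))) : ℝ) : ℂ) * w ξ := by
    intro r
    rw [← integral_const_mul]
    congr 1
    ext ξ
    push_cast
    ring
  simp only [e2, e3]
  have j3 := i3.integral_prod_left
  have j2 := i2.integral_prod_left
  simp only [Pi.sub_apply] at j3
  rw [← integral_add j3 j2]
  apply integral_congr_ae
  filter_upwards [i1.prod_right_ae, i2.prod_right_ae] with r h1 h2
  rw [integral_sub h1 h2]
  ring

/-- The square function component. -/
noncomputable def Q {n : ℕ} (γ : ℝ) (F : EuclideanSpace ℝ (Fin n) → ℂ) (v : ℝ)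
    (x : EuclideanSpace ℝ (Fin n)) : ℂ :=
  ∫ ξ, (((dd γ (‖ξ‖ ^ 2 / v) : ℝ) : ℂ) * F ξ) *
    Complex.exp (2 * Real.pi * Complex.I * (⟪x, ξ⟫ : ℝ))

lemma Q_meas {n : ℕ} (γ : ℝ) {F : EuclideanSpace ℝ (Fin n) → ℂ} (hF : Measurable F) :
    Measurable (fun p : ℝ × EuclideanSpace ℝ (Fin n) => Q γ F p.1 p.2) := by
  unfold Q
  apply StronglyMeasurable.measurable
  apply StronglyMeasurable.integral_prod_right (f := fun (p : ℝ × EuclideanSpace ℝ (Fin n)) ξ =>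
    (((dd γ (‖ξ‖ ^ 2 / p.1) : ℝ) : ℂ) * F ξ) *
    Complex.exp (2 * Real.pi * Complex.I * (⟪p.2, ξ⟫ : ℝ)))
  apply Measurable.stronglyMeasurable
  unfold Function.uncurry
  have : Measurable (fun q : (ℝ × EuclideanSpace ℝ (Fin n)) × EuclideanSpace ℝ (Fin n) =>
    (⟪q.1.2, q.2⟫ : ℝ)) := by
    apply Continuous.measurable
    fun_prop
  fun_prop

lemma sqT {n : ℕ} (γ : ℝ) {h : EuclideanSpace ℝ (Fin n) → ℝ≥0∞} (hh : Measurable h) :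
    ∫⁻ v in Set.Ioi (0 : ℝ), (∫⁻ ξ, ENNReal.ofReal (dd γ (‖ξ‖ ^ 2 / v) ^ 2) * h ξ) *
      ENNReal.ofReal (1 / v) ≤ kK γ * ∫⁻ ξ, h ξ := by
  calc _ = ∫⁻ v in Set.Ioi (0 : ℝ), ∫⁻ ξ : EuclideanSpace ℝ (Fin n), h ξ *
        (ENNReal.ofReal (dd γ (‖ξ‖ ^ 2 / v) ^ 2) * ENNReal.ofReal (1 / v)) := by
        refine lintegral_congr fun v => ?_
        rw [← lintegral_mul_const]
        · refine lintegral_congr fun ξ => ?_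
          ring
        · fun_prop
    _ = ∫⁻ ξ : EuclideanSpace ℝ (Fin n), ∫⁻ v in Set.Ioi (0 : ℝ), h ξ *
        (ENNReal.ofReal (dd γ (‖ξ‖ ^ 2 / v) ^ 2) * ENNReal.ofReal (1 / v)) := by
        apply lintegral_lintegral_swap
        apply Measurable.aemeasurable
        unfold Function.uncurry
        fun_prop
    _ = ∫⁻ ξ : EuclideanSpace ℝ (Fin n), h ξ * ∫⁻ v in Set.Ioi (0 : ℝ),
        (ENNReal.ofReal (dd γ (‖ξ‖ ^ 2 / v) ^ 2) * ENNReal.ofReal (1 / v)) := by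
        refine lintegral_congr fun ξ => ?_
        rw [lintegral_const_mul]
        fun_prop
    _ ≤ ∫⁻ ξ : EuclideanSpace ℝ (Fin n), h ξ * kK γ :=
        lintegral_mono fun ξ => mul_le_mul_right (dd_scale γ (by positivity)) _
    _ = kK γ * ∫⁻ ξ, h ξ := by
        rw [lintegral_mul_const _ hh, mul_comm]

lemma enorm_sq_real (a : ℝ) : ‖(a : ℂ)‖ₑ ^ 2 = ENNReal.ofReal (a ^ 2) := by
  rw [← sq_abs, ENNReal.ofReal_pow (abs_nonneg _), ← ofReal_norm, Complex.norm_real,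
    Real.norm_eq_abs]

lemma sq_bound {n : ℕ} {γ : ℝ} (hγ : -1 / 2 < γ) {F : EuclideanSpace ℝ (Fin n) → ℂ}
    (hF : Measurable F) (h1 : Integrable F) (h2 : MemLp F 2) :
    ∫⁻ x, ∫⁻ v in Set.Ioi (0 : ℝ), ‖Q γ F v x‖ₑ ^ 2 * ENNReal.ofReal (1 / v) ≤
      kK γ * ∫⁻ ξ, ‖F ξ‖ₑ ^ 2 := by
  have f1 : ∫⁻ ξ, ‖F ξ‖ₑ < ∞ := h1.2
  have f2 : ∫⁻ ξ, ‖F ξ‖ₑ ^ 2 < ∞ := by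
    have := h2.2
    rw [eLpNorm_lt_top_iff_lintegral_rpow_enorm_lt_top (by norm_num) (by norm_num)] at this
    simpa using this
  have hk : kK γ < ∞ := dd_fin hγ
  have mm : ∀ {h : EuclideanSpace ℝ (Fin n) → ℝ≥0∞}, Measurable h → Measurable fun v : ℝ =>
      (∫⁻ ξ, ENNReal.ofReal (dd γ (‖ξ‖ ^ 2 / v) ^ 2) * h ξ) * ENNReal.ofReal (1 / v) := by
    intro h hh
    apply Measurable.mul
    · apply Measurable.lintegral_prod_right' (f := fun p : ℝ × EuclideanSpace ℝ (Fin n) =>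
        ENNReal.ofReal (dd γ (‖p.2‖ ^ 2 / p.1) ^ 2) * h p.2)
      fun_prop
    · fun_prop
  have a1 := ae_lt_top (mm hF.enorm)
    ((sqT γ hF.enorm).trans_lt (ENNReal.mul_lt_top hk f1)).ne
  have a2 := ae_lt_top (mm (hF.enorm.pow_const 2))
    ((sqT γ (hF.enorm.pow_const 2)).trans_lt (ENNReal.mul_lt_top hk f2)).ne
  rw [lintegral_lintegral_swap]
  · refine le_trans (lintegral_mono_ae ?_) (sqT γ (hF.enorm.pow_const 2))
    filter_upwards [a1, a2, ae_restrict_mem measurableSet_Ioi] with v b1 b2 hv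
    have hv : 0 < v := hv
    have hv' : ENNReal.ofReal (1 / v) ≠ 0 := by
      rw [Ne, ENNReal.ofReal_eq_zero, not_le]; positivity
    rw [lintegral_mul_const _ (by
      exact (((Q_meas γ hF).comp (measurable_const.prodMk measurable_id)).enorm.pow_const 2))]
    refine mul_le_mul_left ?_ _
    have c1 := ENNReal.lt_top_of_mul_ne_top_left b1.ne hv'
    have c2 := ENNReal.lt_top_of_mul_ne_top_left b2.ne hv'
    have mw : Measurable (fun ξ : EuclideanSpace ℝ (Fin n) =>
      ((dd γ (‖ξ‖ ^ 2 / v) : ℝ) : ℂ) * F ξ) := by fun_prop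
    have esq : ∀ ξ : EuclideanSpace ℝ (Fin n), ‖((dd γ (‖ξ‖ ^ 2 / v) : ℝ) : ℂ) * F ξ‖ₑ ^ 2 =
        ENNReal.ofReal (dd γ (‖ξ‖ ^ 2 / v) ^ 2) * ‖F ξ‖ₑ ^ 2 := by
      intro ξ
      rw [enorm_mul, mul_pow, enorm_sq_real]
    have w2 : MemLp (fun ξ : EuclideanSpace ℝ (Fin n) =>
        ((dd γ (‖ξ‖ ^ 2 / v) : ℝ) : ℂ) * F ξ) 2 := by
      refine ⟨mw.aestronglyMeasurable, ?_⟩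
      rw [eLpNorm_lt_top_iff_lintegral_rpow_enorm_lt_top (by norm_num) (by norm_num)]
      simp only [ENNReal.toReal_ofNat, ENNReal.rpow_ofNat, esq]
      exact c2
    have w1 : Integrable (fun ξ : EuclideanSpace ℝ (Fin n) =>
        ((dd γ (‖ξ‖ ^ 2 / v) : ℝ) : ℂ) * F ξ) := by
      refine ⟨mw.aestronglyMeasurable, ?_⟩
      refine lt_of_le_of_lt (lintegral_mono (g := fun ξ => ‖F ξ‖ₑ +
        ENNReal.ofReal (dd γ (‖ξ‖ ^ 2 / v) ^ 2) * ‖F ξ‖ₑ) fun ξ => ?_) ?_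
      · simp only
        rw [enorm_mul, ← enorm_sq_real, ← one_add_mul]
        gcongr
        rcases le_total ‖((dd γ (‖ξ‖ ^ 2 / v) : ℝ) : ℂ)‖ₑ 1 with h | h
        · exact h.trans le_self_add
        · exact le_trans (le_self_pow₀ h (by norm_num)) le_add_self
      · rw [lintegral_add_left hF.enorm]
        exact ENNReal.add_lt_top.2 ⟨f1, c1⟩
    have := planch_inv w1 w2
    unfold Q
    rw [this]
    exact le_of_eq (lintegral_congr esq)
  · apply Measurable.aemeasurable
    unfold Function.uncurry
    have := (Q_meas γ hF).comp (measurable_swap (α := EuclideanSpace ℝ (Fin n)) (β := ℝ))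
    exact (this.enorm.pow_const 2).mul (by fun_prop)

end BR

namespace BR

lemma sq_add_le (a b : ℝ≥0∞) : (a + b) ^ 2 ≤ 4 * (a ^ 2 + b ^ 2) := by
  have h : a + b ≤ 2 * max a b := by
    rw [two_mul]
    exact add_le_add (le_max_left _ _) (le_max_right _ _)
  calc (a + b) ^ 2 ≤ (2 * max a b) ^ 2 := by gcongr
    _ = 4 * (max a b) ^ 2 := by rw [mul_pow]; norm_num
    _ ≤ 4 * (a ^ 2 + b ^ 2) := by
      gcongr
      rcases le_total a b with h | h
      · rw [max_eq_right h]; exact le_add_self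
      · rw [max_eq_left h]; exact le_self_add

/-- The weight constant. -/
noncomputable def wt (γ : ℝ) : ℝ≥0∞ :=
  ∫⁻ r in Set.Ioi (0 : ℝ), ENNReal.ofReal (bw γ r ^ 2 * r)

lemma weighted_cs {γ u : ℝ} (hu : 0 < u) {q : ℝ → ℂ} (hq : Measurable q) :
    ‖∫ r, ((bw γ r : ℝ) : ℂ) * q (u * r)‖ₑ ^ 2 ≤
      wt γ * ∫⁻ v in Set.Ioi (0 : ℝ), ‖q v‖ₑ ^ 2 * ENNReal.ofReal (1 / v) := by
  have h1 : ‖∫ r, ((bw γ r : ℝ) : ℂ) * q (u * r)‖ₑ ≤ ∫⁻ r in Set.Ioi (0 : ℝ),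
      ENNReal.ofReal (bw γ r * √r) * (‖q (u * r)‖ₑ * ENNReal.ofReal (1 / √r)) := by
    refine (enorm_integral_le_lintegral_enorm _).trans ?_
    rw [← lintegral_indicator measurableSet_Ioi]
    refine lintegral_mono fun r => ?_
    rw [enorm_mul]
    by_cases hr : r ∈ Set.Ioi (0 : ℝ)
    · rw [Set.indicator_of_mem hr]
      have hr : 0 < r := hr
      have hs : 0 < √r := Real.sqrt_pos.2 hr
      rw [mul_left_comm, ← ENNReal.ofReal_mul (mul_nonneg (bw_nonneg _ _) hs.le), mul_comm]
      have e : bw γ r * √r * (1 / √r) = bw γ r := by field_simp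
      rw [e, ← ofReal_norm (bw γ r : ℂ), Complex.norm_real, Real.norm_of_nonneg (bw_nonneg _ _)]
    · rw [bw_zero (fun h => hr h.1)]
      simp
  refine (ENNReal.pow_le_pow_left h1).trans ?_
  refine (cs _ (by fun_prop) (by fun_prop)).trans (le_of_eq ?_)
  rw [← haar_scale (fun v => ‖q v‖ₑ ^ 2) hu, wt]
  congr 1
  · refine setLIntegral_congr_fun measurableSet_Ioi fun r hr => ?_
    have hr : 0 < r := hr
    rw [← ENNReal.ofReal_pow (mul_nonneg (bw_nonneg _ _) (Real.sqrt_nonneg _)), mul_pow,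
      Real.sq_sqrt hr.le]
  · refine setLIntegral_congr_fun measurableSet_Ioi fun r hr => ?_
    have hr : 0 < r := hr
    rw [mul_pow, ← ENNReal.ofReal_pow (by positivity), div_pow, Real.sq_sqrt hr.le, one_pow]

lemma weighted_sup {γ : ℝ} (hγ : -1 / 2 < γ) {q : ℝ → ℂ} {A : ℝ≥0∞}
    (hA : ∀ r, 0 < r → ‖q r‖ₑ ≤ A) :
    ‖∫ r, ((bw γ r : ℝ) : ℂ) * q r‖ₑ ≤ ENNReal.ofReal (bB γ) * A := by
  refine (enorm_integral_le_lintegral_enorm _).trans ?_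
  rw [bB, ofReal_integral_eq_lintegral_ofReal (bw_int hγ) (Eventually.of_forall (bw_nonneg γ)),
    ← lintegral_mul_const _ (by fun_prop)]
  refine lintegral_mono fun r => ?_
  rw [enorm_mul]
  by_cases hr : r ∈ Set.Ioo (0 : ℝ) 1
  · rw [← ofReal_norm, Complex.norm_real, Real.norm_of_nonneg (bw_nonneg _ _)]
    gcongr
    exact hA r hr.1
  · rw [bw_zero hr]
    simp

lemma e_int {n : ℕ} {F : EuclideanSpace ℝ (Fin n) → ℂ}
    (hFi : Integrable F) (x : EuclideanSpace ℝ (Fin n)) :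
    Integrable (fun ξ => F ξ * Complex.exp (2 * Real.pi * Complex.I * (⟪x, ξ⟫ : ℝ))) := by
  refine hFi.mono ?_ (Eventually.of_forall fun ξ => ?_)
  · apply hFi.1.mul
    apply Continuous.aestronglyMeasurable
    fun_prop
  · rw [norm_mul]
    have : 2 * Real.pi * Complex.I * ((⟪x, ξ⟫ : ℝ) : ℂ) =
      ((2 * Real.pi * ⟪x, ξ⟫ : ℝ) : ℂ) * Complex.I := by push_cast; ring
    rw [this, Complex.norm_exp_ofReal_mul_I, mul_one]

lemma k1_bound {n : ℕ} {γ : ℝ} {F : EuclideanSpace ℝ (Fin n) → ℂ} (hFm : Measurable F)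
    {u : ℝ} (hu : 0 < u) (x : EuclideanSpace ℝ (Fin n)) :
    ‖∫ r, ((bw γ r : ℝ) : ℂ) * ∫ ξ, ((dd γ (‖ξ‖ ^ 2 / (u * r)) : ℝ) : ℂ) *
        (F ξ * Complex.exp (2 * Real.pi * Complex.I * (⟪x, ξ⟫ : ℝ)))‖ₑ ^ 2 ≤
      wt γ * (∫⁻ v in Set.Ioi (0 : ℝ), ‖Q γ F v x‖ₑ ^ 2 * ENNReal.ofReal (1 / v)) := by
  have hq : Measurable (fun v => Q γ F v x) :=
    Measurable.comp (g := fun p : ℝ × EuclideanSpace ℝ (Fin n) => Q γ F p.1 p.2)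
      (f := fun v : ℝ => (v, x)) (Q_meas γ hFm) measurable_prodMk_right
  have k1 := weighted_cs (γ := γ) hu (q := fun v => Q γ F v x) hq
  have eQ : ∀ r : ℝ, Q γ F (u * r) x =
      ∫ ξ, ((dd γ (‖ξ‖ ^ 2 / (u * r)) : ℝ) : ℂ) *
        (F ξ * Complex.exp (2 * Real.pi * Complex.I * (⟪x, ξ⟫ : ℝ))) := by
    intro r
    unfold Q
    congr 1
    ext ξ
    rw [mul_assoc]
  simp only [eQ] at k1
  exact k1

lemma k2_bound {n : ℕ} {γ : ℝ} (hγ : -1 / 2 < γ) {F : EuclideanSpace ℝ (Fin n) → ℂ}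
    {u : ℝ} (hu : 0 < u) (x : EuclideanSpace ℝ (Fin n)) {A : ℝ≥0∞}
    (hA : ∀ τ : ℝ, 0 < τ → ‖∫ ξ, ((Real.exp (-τ * ‖ξ‖ ^ 2) : ℝ) : ℂ) * F ξ *
        Complex.exp (2 * Real.pi * Complex.I * (⟪x, ξ⟫ : ℝ))‖ₑ ≤ A) :
    ‖∫ r, ((bw γ r : ℝ) : ℂ) * ∫ ξ, ((Real.exp (-(‖ξ‖ ^ 2 / (u * r))) : ℝ) : ℂ) *
        (F ξ * Complex.exp (2 * Real.pi * Complex.I * (⟪x, ξ⟫ : ℝ)))‖ₑ ≤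
      ENNReal.ofReal (bB γ) * A := by
  have h : ∀ r : ℝ, 0 < r → ‖∫ ξ, ((Real.exp (-(‖ξ‖ ^ 2 / (u * r))) : ℝ) : ℂ) *
        (F ξ * Complex.exp (2 * Real.pi * Complex.I * (⟪x, ξ⟫ : ℝ)))‖ₑ ≤ A := by
    intro r hr
    have hA' := hA (1 / (u * r)) (by positivity)
    have e : (fun ξ : EuclideanSpace ℝ (Fin n) => ((Real.exp (-(‖ξ‖ ^ 2 / (u * r))) : ℝ) : ℂ) *
        (F ξ * Complex.exp (2 * Real.pi * Complex.I * (⟪x, ξ⟫ : ℝ)))) =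
        fun ξ => ((Real.exp (-(1 / (u * r)) * ‖ξ‖ ^ 2) : ℝ) : ℂ) * F ξ *
        Complex.exp (2 * Real.pi * Complex.I * (⟪x, ξ⟫ : ℝ)) := by
      ext ξ
      have e : -(‖ξ‖ ^ 2 / (u * r)) = -(1 / (u * r)) * ‖ξ‖ ^ 2 := by ring
      rw [e, ← mul_assoc]
    rw [e]
    exact hA'
  exact weighted_sup hγ h

lemma ptw_gen {n : ℕ} {γ : ℝ} (hγ : -1 / 2 < γ) {F : EuclideanSpace ℝ (Fin n) → ℂ}
    (hFi : Integrable F) (hFm : Measurable F)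
    {u : ℝ} (hu : 0 < u) (x : EuclideanSpace ℝ (Fin n)) {A : ℝ≥0∞}
    (hA : ∀ τ : ℝ, 0 < τ → ‖∫ ξ, ((Real.exp (-τ * ‖ξ‖ ^ 2) : ℝ) : ℂ) * F ξ *
        Complex.exp (2 * Real.pi * Complex.I * (⟪x, ξ⟫ : ℝ))‖ₑ ≤ A) :
    (ENNReal.ofReal (bB γ) * ‖∫ ξ, ((pw (2 * γ + 1) (1 - ‖ξ‖ ^ 2 / u) : ℝ) : ℂ) *
        (F ξ * Complex.exp (2 * Real.pi * Complex.I * (⟪x, ξ⟫ : ℝ)))‖ₑ) ^ 2 ≤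
      4 * (wt γ * (∫⁻ v in Set.Ioi (0 : ℝ), ‖Q γ F v x‖ₑ ^ 2 * ENNReal.ofReal (1 / v)) +
      (ENNReal.ofReal (bB γ) * A) ^ 2) := by
  have key := subord hγ hu (e_int hFi x)
  have hB : ‖((bB γ : ℝ) : ℂ)‖ₑ = ENNReal.ofReal (bB γ) := by
    rw [← ofReal_norm, Complex.norm_real, Real.norm_of_nonneg (bB_pos hγ).le]
  have k1 := k1_bound (γ := γ) hFm hu x
  have k2 := k2_bound hγ hu x hA
  have k3 := congrArg (fun z : ℂ => ‖z‖ₑ) key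
  simp only [enorm_mul, hB] at k3
  rw [k3]
  refine (pow_le_pow_left' (enorm_add_le _ _) 2).trans ((sq_add_le _ _).trans ?_)
  exact mul_le_mul_right (add_le_add k1 (pow_le_pow_left' k2 2)) _

lemma ptw {n : ℕ} {γ : ℝ} (hγ : -1 / 2 < γ) (f : SchwartzMap (EuclideanSpace ℝ (Fin n)) ℂ)
    (hFi : Integrable (𝓕 (f : EuclideanSpace ℝ (Fin n) → ℂ)))
    (hFm : Measurable (𝓕 (f : EuclideanSpace ℝ (Fin n) → ℂ)))
    {R : ℝ} (hR : 0 < R) (x : EuclideanSpace ℝ (Fin n)) :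
    ENNReal.ofReal (bB γ) ^ 2 * ‖bochnerRiesz n (2 * γ + 1) R f x‖ₑ ^ 2 ≤
      4 * (wt γ * (∫⁻ v in Set.Ioi (0 : ℝ),
        ‖Q γ (𝓕 (f : EuclideanSpace ℝ (Fin n) → ℂ)) v x‖ₑ ^ 2 * ENNReal.ofReal (1 / v)) +
      (ENNReal.ofReal (bB γ) * ENNReal.ofReal (cn n)) ^ 2 *
        (⨆ k : ℤ, P k (fun y => ‖f y‖ₑ) x) ^ 2) := by
  have key := ptw_gen hγ hFi hFm (show 0 < R ^ 2 by positivity) x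
    (fun τ hτ => gauss_max f.integrable hτ x)
  have eS : bochnerRiesz n (2 * γ + 1) R f x =
      ∫ ξ, ((pw (2 * γ + 1) (1 - ‖ξ‖ ^ 2 / R ^ 2) : ℝ) : ℂ) *
        (𝓕 (f : EuclideanSpace ℝ (Fin n) → ℂ) ξ *
          Complex.exp (2 * Real.pi * Complex.I * (⟪x, ξ⟫ : ℝ))) := by
    unfold bochnerRiesz
    congr 1
    ext ξ
    rw [pw_eq_max (by linarith), mul_assoc]
  rw [← eS, ← mul_assoc, mul_pow, mul_pow (_ * _)] at key
  exact key

/-- The final constant. -/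
noncomputable def KK (n : ℕ) (γ : ℝ) : ℝ≥0∞ :=
  (ENNReal.ofReal (bB γ) ^ 2)⁻¹ * (4 * (wt γ * kK γ +
    (ENNReal.ofReal (bB γ) * ENNReal.ofReal (cn n)) ^ 2 * (8 * cc n ^ 2)))

lemma KK_fin {n : ℕ} {γ : ℝ} (hγ : -1 / 2 < γ) : KK n γ < ∞ := by
  have h1 : ENNReal.ofReal (bB γ) ≠ 0 := by
    rw [Ne, ENNReal.ofReal_eq_zero, not_le]; exact bB_pos hγ
  have h2 : wt γ ≠ ∞ := (weight_fin hγ).ne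
  have h3 : kK γ ≠ ∞ := (dd_fin hγ).ne
  have h4 : (ENNReal.ofReal (bB γ) ^ 2)⁻¹ ≠ ∞ := ENNReal.inv_ne_top.2 (pow_ne_zero _ h1)
  unfold KK cc
  finiteness

lemma main_sq {n : ℕ} {γ : ℝ} (hγ : -1 / 2 < γ) (f : SchwartzMap (EuclideanSpace ℝ (Fin n)) ℂ) :
    ∫⁻ x, (⨆ (R : ℝ) (_ : 0 < R), (‖bochnerRiesz n (2 * γ + 1) R f x‖₊ : ℝ≥0∞)) ^ (2 : ℝ) ≤
      KK n γ * ∫⁻ x, ‖f x‖ₑ ^ 2 := by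
  have hFe : 𝓕 (f : EuclideanSpace ℝ (Fin n) → ℂ) = ((𝓕 f : SchwartzMap _ ℂ) : _ → ℂ) :=
    (SchwartzMap.fourier_coe f).symm
  have hFi : Integrable (𝓕 (f : EuclideanSpace ℝ (Fin n) → ℂ)) := by
    rw [hFe]; exact (𝓕 f).integrable
  have hF2 : MemLp (𝓕 (f : EuclideanSpace ℝ (Fin n) → ℂ)) 2 := by
    rw [hFe]; exact (𝓕 f).memLp 2
  have hFm : Measurable (𝓕 (f : EuclideanSpace ℝ (Fin n) → ℂ)) := by
    rw [hFe]; exact (𝓕 f).continuous.measurable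
  have hfm : Measurable (fun y => ‖f y‖ₑ) := f.continuous.measurable.enorm
  have h1 : ENNReal.ofReal (bB γ) ≠ 0 := by
    rw [Ne, ENNReal.ofReal_eq_zero, not_le]; exact bB_pos hγ
  have h2 : wt γ ≠ ∞ := (weight_fin hγ).ne
  have h4 : (ENNReal.ofReal (bB γ) ^ 2)⁻¹ ≠ ∞ := ENNReal.inv_ne_top.2 (pow_ne_zero _ h1)
  set S : EuclideanSpace ℝ (Fin n) → ℝ≥0∞ := fun x => ∫⁻ v in Set.Ioi (0 : ℝ),
        ‖Q γ (𝓕 (f : EuclideanSpace ℝ (Fin n) → ℂ)) v x‖ₑ ^ 2 * ENNReal.ofReal (1 / v) with hS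
  set M : EuclideanSpace ℝ (Fin n) → ℝ≥0∞ := fun x => ⨆ k : ℤ, P k (fun y => ‖f y‖ₑ) x with hM
  have hMm : Measurable M := Measurable.iSup fun k => P_meas k hfm
  calc _ ≤ ∫⁻ x, (ENNReal.ofReal (bB γ) ^ 2)⁻¹ * (4 * (wt γ * S x +
        (ENNReal.ofReal (bB γ) * ENNReal.ofReal (cn n)) ^ 2 * M x ^ 2)) := by
        refine lintegral_mono fun x => ?_
        rw [← ENNReal.le_rpow_inv_iff (by norm_num)]
        refine iSup₂_le fun R hR => ?_
        rw [ENNReal.le_rpow_inv_iff (by norm_num), ENNReal.rpow_two,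
          ← ENNReal.mul_le_iff_le_inv (pow_ne_zero _ h1) (by finiteness)]
        exact ptw hγ f hFi hFm hR x
    _ = (ENNReal.ofReal (bB γ) ^ 2)⁻¹ * (4 * (wt γ * (∫⁻ x, S x) +
        (ENNReal.ofReal (bB γ) * ENNReal.ofReal (cn n)) ^ 2 * ∫⁻ x, M x ^ 2)) := by
        rw [lintegral_const_mul' _ _ h4, lintegral_const_mul' _ _ (by finiteness),
          lintegral_add_right _ (by fun_prop), lintegral_const_mul' _ _ h2,
          lintegral_const_mul' _ _ (by finiteness)]
    _ ≤ (ENNReal.ofReal (bB γ) ^ 2)⁻¹ * (4 * (wt γ * (kK γ * ∫⁻ x, ‖f x‖ₑ ^ 2) +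
        (ENNReal.ofReal (bB γ) * ENNReal.ofReal (cn n)) ^ 2 *
          (8 * cc n ^ 2 * ∫⁻ x, ‖f x‖ₑ ^ 2))) := by
        gcongr
        · rw [← planch f.integrable (f.memLp 2)]
          exact sq_bound hγ hFm hFi hF2
        · exact max_all hfm
    _ = _ := by
        unfold KK
        ring

end BR

theorem maximal_bochnerRiesz_L2_bound (n : ℕ) (hn : 1 ≤ n) (α : ℝ) (hα : 0 < α) :
    ∃ C : ℝ, 0 < C ∧ ∀ f : SchwartzMap (EuclideanSpace ℝ (Fin n)) ℂ,
      (∫⁻ x, (⨆ (R : ℝ) (_ : 0 < R), (‖bochnerRiesz n α R f x‖₊ : ℝ≥0∞)) ^ (2 : ℝ) ∂volume)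
          ^ (1 / 2 : ℝ)
        ≤ ENNReal.ofReal C * eLpNorm f 2 volume := by
  have hγ : -1 / 2 < (α - 1) / 2 := by linarith
  have hK := BR.KK_fin (n := n) hγ
  set K : ℝ≥0∞ := BR.KK n ((α - 1) / 2) ^ (1 / 2 : ℝ) with hKdef
  have hK' : K ≠ ∞ := ENNReal.rpow_ne_top_of_nonneg (by norm_num) hK.ne
  refine ⟨K.toReal + 1, by positivity, fun f => ?_⟩
  have h := BR.main_sq hγ f
  have e : 2 * ((α - 1) / 2) + 1 = α := by ring
  rw [e] at h
  have h' := ENNReal.rpow_le_rpow h (show (0 : ℝ) ≤ 1 / 2 by norm_num)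
  refine h'.trans ?_
  rw [ENNReal.mul_rpow_of_nonneg _ _ (by norm_num), ← hKdef,
    eLpNorm_eq_lintegral_rpow_enorm_toReal (by norm_num) (by norm_num)]
  simp only [ENNReal.toReal_ofNat, ENNReal.rpow_ofNat]
  gcongr
  rw [ENNReal.le_ofReal_iff_toReal_le hK' (by positivity)]
  linarith
end

section
/- Let n ≥ 1 be an integer and let s > n + 1/2. There exists a constant C = C(n,s) such that for every bounded Borel function m : ℝ → ℂ with m(λ) = 0 for |λ| > 2 and ‖m‖_{W_s²} < ∞, every Schwartz function f on ℝⁿ, every t > 0 and every x ∈ ℝⁿ, one has |∫_{ℝⁿ} m(t|ξ|) f̂(ξ) e^{2πi⟨x,ξ⟩} dξ| ≤ C ‖m‖_{W_s²} 𝔐f(x), where 𝔐f is the uncentered Hardy–Littlewood maximal function of f. -/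
open MeasureTheory Complex Filter
open scoped FourierTransform RealInnerProductSpace ENNReal Topology

/-- The Sobolev norm `‖F‖_{W_s²} = (∫ (1+τ²)^s |F̂(τ)|² dτ)^{1/2}` where
`F̂(τ) = ∫ F(λ) e^{-iλτ} dλ`, as an extended nonnegative real. -/
noncomputable def sobolevW2 (s : ℝ) (F : ℝ → ℂ) : ℝ≥0∞ :=
  (∫⁻ τ : ℝ, ENNReal.ofReal ((1 + τ ^ 2) ^ s) *
      (‖∫ l : ℝ, F l * Complex.exp (-(Complex.I * l * τ))‖₊ : ℝ≥0∞) ^ 2) ^ (1 / 2 : ℝ)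

/-- The uncentered Hardy–Littlewood maximal function
`𝔐 f(x) = sup_{B ∋ x} |B|⁻¹ ∫_B |f|`, as an extended nonnegative real. -/
noncomputable def uncenteredMaximal (n : ℕ) (f : EuclideanSpace ℝ (Fin n) → ℂ)
    (x : EuclideanSpace ℝ (Fin n)) : ℝ≥0∞ :=
  ⨆ (c : EuclideanSpace ℝ (Fin n)) (r : ℝ) (_ : 0 < r) (_ : x ∈ Metric.ball c r),
    (∫⁻ y in Metric.ball c r, (‖f y‖₊ : ℝ≥0∞) ∂volume) / volume (Metric.ball c r)

lemma int_expabs : Integrable (fun v : ℝ => cexp (-(|v| : ℝ))) := by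
  have h1 : IntegrableOn (fun v : ℝ => cexp (-(|v| : ℝ))) (Set.Ioi 0) := by
    refine (integrableOn_exp_mul_complex_Ioi (a := -1) (by simp) 0).congr_fun ?_ measurableSet_Ioi
    intro v hv
    simp [abs_of_pos (Set.mem_Ioi.1 hv)]
  have h2 : IntegrableOn (fun v : ℝ => cexp (-(|v| : ℝ))) (Set.Iic 0) := by
    refine (integrableOn_exp_mul_complex_Iic (a := 1) (by simp) 0).congr_fun ?_ measurableSet_Iic
    intro v hv
    simp [abs_of_nonpos (Set.mem_Iic.1 hv)]
  rw [← integrableOn_univ, ← Set.Iic_union_Ioi (a := (0:ℝ))]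
  exact h2.union h1

lemma fourier_expabs (w : ℝ) :
    𝓕 (fun v : ℝ => cexp (-(|v| : ℝ))) w = ((2 / (1 + 4 * Real.pi ^ 2 * w ^ 2) : ℝ) : ℂ) := by
  rw [Real.fourier_real_eq]
  have hint : Integrable (fun v : ℝ => 𝐞 (-(v * w)) • cexp (-(|v| : ℝ))) := by
    have := (Real.fourierIntegral_convergent_iff (μ := volume) (f := fun v : ℝ => cexp (-(|v| : ℝ))) w).2 int_expabs
    simpa [mul_comm] using this
  rw [← setIntegral_univ, ← Set.Iic_union_Ioi (a := (0:ℝ)),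
    setIntegral_union (Set.Iic_disjoint_Ioi le_rfl) measurableSet_Ioi hint.integrableOn hint.integrableOn]
  have e1 : ∫ v in Set.Iic (0:ℝ), 𝐞 (-(v * w)) • cexp (-(|v| : ℝ)) =
      ∫ v in Set.Iic (0:ℝ), cexp ((1 - 2 * Real.pi * w * I) * v) := by
    refine setIntegral_congr_fun measurableSet_Iic ?_
    intro v hv
    simp only [abs_of_nonpos (Set.mem_Iic.1 hv), Circle.smul_def, Real.fourierChar_apply, smul_eq_mul, ← Complex.exp_add]
    congr 1; push_cast; ring
  have e2 : ∫ v in Set.Ioi (0:ℝ), 𝐞 (-(v * w)) • cexp (-(|v| : ℝ)) =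
      ∫ v in Set.Ioi (0:ℝ), cexp ((-1 - 2 * Real.pi * w * I) * v) := by
    refine setIntegral_congr_fun measurableSet_Ioi ?_
    intro v hv
    simp only [abs_of_pos (Set.mem_Ioi.1 hv), Circle.smul_def, Real.fourierChar_apply, smul_eq_mul, ← Complex.exp_add]
    congr 1; push_cast; ring
  rw [e1, e2, integral_exp_mul_complex_Iic (by simp), integral_exp_mul_complex_Ioi (by simp)]
  have n1 : (1 - 2 * Real.pi * w * I : ℂ) ≠ 0 := fun h => by simpa using congrArg Complex.re h
  have n2 : (-1 - 2 * Real.pi * w * I : ℂ) ≠ 0 := fun h => by simpa using congrArg Complex.re h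
  have n3 : (1 + 4 * Real.pi ^ 2 * w ^ 2 : ℂ) ≠ 0 := by
    have : (1 + 4 * Real.pi ^ 2 * w ^ 2 : ℝ) ≠ 0 := by positivity
    exact_mod_cast this
  push_cast
  simp only [mul_zero, Complex.exp_zero]
  rw [div_add_div _ _ n1 n2, div_eq_div_iff (mul_ne_zero n1 n2) n3]
  ring_nf
  simp only [I_sq]
  ring

lemma int_cauchy : Integrable (fun w : ℝ => (2 / (1 + 4 * Real.pi ^ 2 * w ^ 2) : ℝ)) := by
  have := ((integrable_inv_one_add_sq).comp_mul_left' (R := 2 * Real.pi) (by positivity)).const_mul 2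
  refine this.congr (ae_of_all _ fun w => ?_)
  simp only [div_eq_mul_inv]; ring_nf

lemma int_prod_aux : Integrable (Function.uncurry fun (v u : ℝ) =>
    Real.exp (-(u * (1 + 4 * Real.pi ^ 2 * v ^ 2)))) (volume.prod (volume.restrict (Set.Ioi 0))) := by
  rw [integrable_prod_iff (Continuous.aestronglyMeasurable (by unfold Function.uncurry; fun_prop))]
  have hp : ∀ v : ℝ, 0 < 1 + 4 * Real.pi ^ 2 * v ^ 2 := fun v => by positivity
  constructor
  · refine ae_of_all _ fun v => ?_
    refine (exp_neg_integrableOn_Ioi 0 (hp v)).congr (ae_of_all _ fun u => ?_)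
    simp only [Function.uncurry]; congr 1; ring
  · refine (int_cauchy.div_const 2).congr (ae_of_all _ fun v => ?_)
    simp only [Function.uncurry, Real.norm_eq_abs, Real.abs_exp]
    have := Real.integral_rpow_mul_exp_neg_mul_Ioi (a := 1) one_pos (hp v)
    simp at this
    simp_rw [mul_comm _ (1 + 4 * Real.pi ^ 2 * v ^ 2)]
    rw [this]; field_simp

/-- subordination formula -/
lemma subord (a : ℝ) : Real.exp (-|a|) =
    ∫ u in Set.Ioi (0:ℝ), Real.exp (-u) * (Real.pi * u) ^ (-(1/2 : ℝ)) * Real.exp (-(a ^ 2 / (4 * u))) := by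
  have hF : 𝓕 (fun v : ℝ => cexp (-(|v| : ℝ))) = fun w => ((2 / (1 + 4 * Real.pi ^ 2 * w ^ 2) : ℝ) : ℂ) :=
    funext fourier_expabs
  have hinv := Continuous.fourierInv_fourier_eq (f := fun v : ℝ => cexp (-(|v| : ℝ))) (by fun_prop) int_expabs
    (by rw [hF]; exact int_cauchy.ofReal)
  have h := congrFun hinv a
  rw [hF, Real.fourierInv_eq] at h
  have hp : ∀ v : ℝ, 0 < 1 + 4 * Real.pi ^ 2 * v ^ 2 := fun v => by positivity
  have hc : ∀ v : ℝ, ((2 / (1 + 4 * Real.pi ^ 2 * v ^ 2) : ℝ) : ℂ) =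
      ∫ u in Set.Ioi (0:ℝ), ((2 * Real.exp (-(u * (1 + 4 * Real.pi ^ 2 * v ^ 2))) : ℝ) : ℂ) := by
    intro v
    rw [integral_complex_ofReal, integral_const_mul]
    have := Real.integral_rpow_mul_exp_neg_mul_Ioi (a := 1) one_pos (hp v)
    simp at this
    simp_rw [mul_comm _ (1 + 4 * Real.pi ^ 2 * v ^ 2)]
    rw [this]; norm_cast
  simp_rw [hc, Circle.smul_def, smul_eq_mul, ← integral_const_mul] at h
  rw [integral_integral_swap] at h
  · have key : ∀ u ∈ Set.Ioi (0:ℝ), (∫ v : ℝ, (𝐞 ⟪v, a⟫ : ℂ) * ((2 * Real.exp (-(u * (1 + 4 * Real.pi ^ 2 * v ^ 2))) : ℝ) : ℂ)) =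
      ((Real.exp (-u) * (Real.pi * u) ^ (-(1/2 : ℝ)) * Real.exp (-(a ^ 2 / (4 * u))) : ℝ) : ℂ) := by
      intro u hu
      have hu : 0 < u := hu
      have hg := fourier_gaussian_innerProductSpace (V := ℝ) (b := ((4 * Real.pi ^ 2 * u : ℝ) : ℂ)) (by simp only [ofReal_re]; positivity) (-a)
      rw [Real.fourier_eq] at hg
      have e : ∀ v : ℝ, (𝐞 ⟪v, a⟫ : ℂ) * ((2 * Real.exp (-(u * (1 + 4 * Real.pi ^ 2 * v ^ 2))) : ℝ) : ℂ) =
          ((2 * Real.exp (-u) : ℝ) : ℂ) * (𝐞 (-⟪v, -a⟫) • cexp (-((4 * Real.pi ^ 2 * u : ℝ) : ℂ) * ‖v‖ ^ 2)) := by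
        intro v
        have : cexp (-((4 * Real.pi ^ 2 * u : ℝ) : ℂ) * ‖v‖ ^ 2) = ((Real.exp (-(4 * Real.pi ^ 2 * u * v ^ 2)) : ℝ) : ℂ) := by
          rw [ofReal_exp]; congr 1; rw [← ofReal_pow, Real.norm_eq_abs, sq_abs]; push_cast; ring
        rw [this, inner_neg_right, neg_neg, Circle.smul_def, smul_eq_mul,
          show -(u * (1 + 4 * Real.pi ^ 2 * v ^ 2)) = -u + -(4 * Real.pi ^ 2 * u * v ^ 2) by ring, Real.exp_add]
        push_cast; ring
      simp_rw [e]
      rw [integral_const_mul, hg]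
      have e1 : ((Real.pi : ℂ) / ((4 * Real.pi ^ 2 * u : ℝ) : ℂ)) ^ ((Module.finrank ℝ ℝ : ℂ) / 2) =
          (((Real.pi * u) ^ (-(1/2 : ℝ)) / 2 : ℝ) : ℂ) := by
        have : (Real.pi : ℂ) / ((4 * Real.pi ^ 2 * u : ℝ) : ℂ) = (((4 * (Real.pi * u))⁻¹ : ℝ) : ℂ) := by
          rw [← ofReal_div]; congr 1; field_simp
        rw [this, show ((Module.finrank ℝ ℝ : ℂ) / 2) = ((1/2 : ℝ) : ℂ) by simp, ← ofReal_cpow (by positivity)]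
        congr 1
        rw [mul_inv, Real.mul_rpow (by positivity) (by positivity), Real.inv_rpow (by positivity),
          Real.inv_rpow (by positivity), Real.rpow_neg (by positivity),
          show (4:ℝ) = 2 ^ (2:ℝ) by norm_num, ← Real.rpow_mul (by norm_num)]
        norm_num; ring
      have e2 : cexp (-(Real.pi : ℂ) ^ 2 * ‖-a‖ ^ 2 / ((4 * Real.pi ^ 2 * u : ℝ) : ℂ)) =
          ((Real.exp (-(a ^ 2 / (4 * u))) : ℝ) : ℂ) := by
        rw [ofReal_exp]; congr 1
        rw [norm_neg, ← ofReal_pow ‖a‖, Real.norm_eq_abs, sq_abs]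
        have : (u : ℂ) ≠ 0 := by exact_mod_cast hu.ne'
        have : (Real.pi : ℂ) ≠ 0 := by exact_mod_cast Real.pi_ne_zero
        push_cast; field_simp
      rw [e1, e2]; push_cast; ring
    rw [setIntegral_congr_fun measurableSet_Ioi key, integral_complex_ofReal] at h
    have h2 : cexp (-(|a| : ℝ)) = ((Real.exp (-|a|) : ℝ) : ℂ) := by push_cast; rfl
    rw [h2] at h
    exact (by exact_mod_cast h.symm)
  · refine (int_prod_aux.const_mul 2).mono' ?_ (ae_of_all _ fun p => ?_)
    · refine Continuous.aestronglyMeasurable ?_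
      unfold Function.uncurry
      simp only [Real.fourierChar_apply]
      fun_prop
    · simp only [Function.uncurry, norm_mul, Circle.norm_coe, one_mul, norm_real]
      simp [Real.norm_eq_abs, Real.abs_exp]

noncomputable def Gk {n : ℕ} (x : EuclideanSpace ℝ (Fin n)) (z : ℂ) : ℂ :=
  ∫ ξ : EuclideanSpace ℝ (Fin n), cexp (-z * ‖ξ‖) * cexp (2 * Real.pi * I * (⟪x, ξ⟫ : ℝ))

lemma nontriv {n : ℕ} (hn : 1 ≤ n) : Nontrivial (EuclideanSpace ℝ (Fin n)) := by
  have : Nonempty (Fin n) := ⟨⟨0, hn⟩⟩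
  infer_instance

lemma int_pow_exp {n : ℕ} (hn : 1 ≤ n) (k : ℕ) {c : ℝ} (hc : 0 < c) :
    Integrable (fun ξ : EuclideanSpace ℝ (Fin n) => ‖ξ‖ ^ k * Real.exp (-c * ‖ξ‖)) := by
  have := nontriv hn
  rw [integrable_fun_norm_addHaar volume (f := fun r : ℝ => r ^ k * Real.exp (-c * r))]
  have h := integrableOn_rpow_mul_exp_neg_mul_rpow (p := 1) (s := ((Module.finrank ℝ (EuclideanSpace ℝ (Fin n)) - 1 + k : ℕ) : ℝ)) (b := c)
    (lt_of_lt_of_le (by norm_num) (Nat.cast_nonneg _)) one_pos hc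
  refine h.congr_fun ?_ measurableSet_Ioi
  intro r _
  simp only [Real.rpow_natCast, Real.rpow_one, smul_eq_mul]
  ring

lemma int_exp {n : ℕ} (hn : 1 ≤ n) {c : ℝ} (hc : 0 < c) :
    Integrable (fun ξ : EuclideanSpace ℝ (Fin n) => Real.exp (-c * ‖ξ‖)) := by
  simpa using int_pow_exp hn 0 hc

lemma norm_char (a : ℝ) : ‖cexp (2 * Real.pi * I * (a : ℝ))‖ = 1 := by
  have : (2 * Real.pi * I * (a : ℝ) : ℂ) = ((2 * Real.pi * a : ℝ) : ℂ) * I := by push_cast; ring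
  rw [this, norm_exp_ofReal_mul_I]

lemma int_Gk {n : ℕ} (hn : 1 ≤ n) (x : EuclideanSpace ℝ (Fin n)) {z : ℂ} (hz : 0 < z.re) :
    Integrable (fun ξ : EuclideanSpace ℝ (Fin n) =>
      cexp (-z * ‖ξ‖) * cexp (2 * Real.pi * I * (⟪x, ξ⟫ : ℝ))) := by
  refine (int_exp hn hz).mono' (Continuous.aestronglyMeasurable (by fun_prop)) (ae_of_all _ fun ξ => ?_)
  rw [norm_mul, norm_char, mul_one, norm_exp]
  simp

lemma diff_Gk {n : ℕ} (hn : 1 ≤ n) (x : EuclideanSpace ℝ (Fin n)) {z : ℂ} (hz : 0 < z.re) :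
    DifferentiableAt ℂ (Gk x) z := by
  have hs : {w : ℂ | z.re / 2 < w.re} ∈ 𝓝 z :=
    (isOpen_lt continuous_const Complex.continuous_re).mem_nhds (by simpa using hz)
  refine (hasDerivAt_integral_of_dominated_loc_of_deriv_le (μ := volume)
    (F := fun (z : ℂ) (ξ : EuclideanSpace ℝ (Fin n)) => cexp (-z * ‖ξ‖) * cexp (2 * Real.pi * I * (⟪x, ξ⟫ : ℝ)))
    (F' := fun z ξ => (-(‖ξ‖ : ℂ)) * cexp (-z * ‖ξ‖) * cexp (2 * Real.pi * I * (⟪x, ξ⟫ : ℝ)))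
    (bound := fun ξ => ‖ξ‖ ^ 1 * Real.exp (-(z.re / 2) * ‖ξ‖)) hs ?_ (int_Gk hn x hz) ?_ ?_
    (int_pow_exp hn 1 (half_pos hz)) ?_).2.differentiableAt
  · exact Eventually.of_forall fun w => Continuous.aestronglyMeasurable (by fun_prop)
  · exact Continuous.aestronglyMeasurable (by fun_prop)
  · refine ae_of_all _ fun ξ w hw => ?_
    rw [norm_mul, norm_char, mul_one, norm_mul, norm_exp, norm_neg, norm_real, norm_norm, pow_one]
    gcongr
    have : (-w * (‖ξ‖ : ℂ)).re = -w.re * ‖ξ‖ := by simp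
    rw [this]
    have hw : z.re / 2 < w.re := hw
    gcongr
  · refine ae_of_all _ fun ξ w hw => ?_
    have h1 : HasDerivAt (fun w : ℂ => -w * (‖ξ‖ : ℂ)) (-1 * (‖ξ‖ : ℂ)) w :=
      ((hasDerivAt_id w).neg).mul_const _
    have := (h1.cexp).mul_const (cexp (2 * Real.pi * I * (⟪x, ξ⟫ : ℝ)))
    convert! this using 1
    ring

noncomputable def cn (n : ℕ) : ℝ :=
  Real.pi ^ (-(1/2) : ℝ) * (4 * Real.pi) ^ ((n : ℝ) / 2) * Real.Gamma (((n : ℝ) + 1) / 2)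

lemma int_w : IntegrableOn (fun u : ℝ => Real.exp (-u) * (Real.pi * u) ^ (-(1/2 : ℝ))) (Set.Ioi 0) := by
  have h := (integrableOn_rpow_mul_exp_neg_mul_rpow (p := 1) (s := -(1/2)) (b := 1)
    (by norm_num) one_pos one_pos).const_mul (Real.pi ^ (-(1/2) : ℝ))
  refine IntegrableOn.congr_fun h ?_ measurableSet_Ioi
  intro u hu
  simp only [Real.rpow_one]
  rw [Real.mul_rpow Real.pi_pos.le (Set.mem_Ioi.1 hu).le]
  ring_nf

lemma Gk_real {n : ℕ} (hn : 1 ≤ n) (x : EuclideanSpace ℝ (Fin n)) {y : ℝ} (hy : 0 < y) :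
    Gk x y = ((cn n * (y ^ n)⁻¹ *
      (1 / (1 + 4 * Real.pi ^ 2 * ‖x‖ ^ 2 / y ^ 2)) ^ (((n : ℝ) + 1) / 2) : ℝ) : ℂ) := by
  unfold Gk
  have hw0 : ∀ u ∈ Set.Ioi (0:ℝ), ∀ a : ℝ, 0 ≤ Real.exp (-u) * (Real.pi * u) ^ (-(1/2 : ℝ)) * Real.exp a := by
    intro u hu a
    have : 0 < u := hu
    positivity
  have hc : ∀ ξ : EuclideanSpace ℝ (Fin n), cexp (-(y : ℂ) * ‖ξ‖) =
      ∫ u in Set.Ioi (0:ℝ), ((Real.exp (-u) * (Real.pi * u) ^ (-(1/2 : ℝ)) *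
        Real.exp (-((y * ‖ξ‖) ^ 2 / (4 * u))) : ℝ) : ℂ) := by
    intro ξ
    rw [integral_complex_ofReal, ← subord, abs_of_nonneg (by positivity)]
    push_cast; ring_nf
  simp_rw [hc, ← integral_mul_const]
  rw [integral_integral_swap]
  · have key : ∀ u ∈ Set.Ioi (0:ℝ), (∫ ξ : EuclideanSpace ℝ (Fin n), ((Real.exp (-u) * (Real.pi * u) ^ (-(1/2 : ℝ)) *
        Real.exp (-((y * ‖ξ‖) ^ 2 / (4 * u))) : ℝ) : ℂ) * cexp (2 * Real.pi * I * (⟪x, ξ⟫ : ℝ))) =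
        ((Real.pi ^ (-(1/2) : ℝ) * (4 * Real.pi) ^ ((n : ℝ) / 2) * (y ^ n)⁻¹ *
          (u ^ (((n : ℝ) + 1) / 2 - 1) * Real.exp (-((1 + 4 * Real.pi ^ 2 * ‖x‖ ^ 2 / y ^ 2) * u))) : ℝ) : ℂ) := by
      intro u hu
      have hu : 0 < u := hu
      have hb : 0 < y ^ 2 / (4 * u) := by positivity
      have hg := fourier_gaussian_innerProductSpace' (b := ((y ^ 2 / (4 * u) : ℝ) : ℂ)) (by rw [ofReal_re]; exact hb) x 0
      rw [Real.fourier_eq] at hg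
      simp only [inner_zero_right, neg_zero, AddChar.map_zero_eq_one, one_smul, sub_zero] at hg
      have e : ∀ ξ : EuclideanSpace ℝ (Fin n), ((Real.exp (-u) * (Real.pi * u) ^ (-(1/2 : ℝ)) *
        Real.exp (-((y * ‖ξ‖) ^ 2 / (4 * u))) : ℝ) : ℂ) * cexp (2 * Real.pi * I * (⟪x, ξ⟫ : ℝ)) =
          ((Real.exp (-u) * (Real.pi * u) ^ (-(1/2 : ℝ)) : ℝ) : ℂ) *
          cexp (-((y ^ 2 / (4 * u) : ℝ) : ℂ) * ‖ξ‖ ^ 2 + 2 * Real.pi * I * (⟪x, ξ⟫ : ℝ)) := by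
        intro ξ
        rw [Complex.exp_add, ofReal_mul _ (Real.exp (-((y * ‖ξ‖) ^ 2 / (4 * u)))), ofReal_exp (-((y * ‖ξ‖) ^ 2 / (4 * u))), mul_assoc]
        congr 3
        push_cast; ring
      simp_rw [e]
      rw [integral_const_mul, hg]
      have e1 : ((Real.pi : ℂ) / ((y ^ 2 / (4 * u) : ℝ) : ℂ)) ^ ((Module.finrank ℝ (EuclideanSpace ℝ (Fin n)) : ℂ) / 2) =
          (((4 * Real.pi) ^ ((n : ℝ) / 2) * u ^ ((n : ℝ) / 2) * (y ^ n)⁻¹ : ℝ) : ℂ) := by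
        have : (Real.pi : ℂ) / ((y ^ 2 / (4 * u) : ℝ) : ℂ) = (((4 * Real.pi) * u * (y ^ 2)⁻¹ : ℝ) : ℂ) := by
          rw [← ofReal_div]; congr 1; field_simp
        rw [this, show ((Module.finrank ℝ (EuclideanSpace ℝ (Fin n)) : ℂ) / 2) = (((n : ℝ) / 2 : ℝ) : ℂ) by simp, ← ofReal_cpow (by positivity)]
        congr 1
        rw [Real.mul_rpow (by positivity) (by positivity), Real.mul_rpow (by positivity) (by positivity),
          Real.inv_rpow (by positivity), ← Real.rpow_natCast y 2, ← Real.rpow_mul hy.le]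
        congr 2
        rw [← Real.rpow_natCast]; congr 1; push_cast; ring
      have e2 : cexp (-(Real.pi : ℂ) ^ 2 * ‖x‖ ^ 2 / ((y ^ 2 / (4 * u) : ℝ) : ℂ)) =
          ((Real.exp (-(4 * Real.pi ^ 2 * ‖x‖ ^ 2 / y ^ 2 * u)) : ℝ) : ℂ) := by
        rw [ofReal_exp]; congr 1
        have : (u : ℂ) ≠ 0 := by exact_mod_cast hu.ne'
        have : (y : ℂ) ≠ 0 := by exact_mod_cast hy.ne'
        push_cast; field_simp
      rw [e1, e2, ← ofReal_mul, ← ofReal_mul]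
      congr 1
      rw [show -((1 + 4 * Real.pi ^ 2 * ‖x‖ ^ 2 / y ^ 2) * u) = -u + -(4 * Real.pi ^ 2 * ‖x‖ ^ 2 / y ^ 2 * u) by ring,
        Real.exp_add, Real.mul_rpow Real.pi_pos.le hu.le,
        show ((n : ℝ) + 1) / 2 - 1 = -(1/2) + (n : ℝ) / 2 by ring, Real.rpow_add hu]
      ring
    rw [setIntegral_congr_fun measurableSet_Ioi key, integral_complex_ofReal, integral_const_mul,
      Real.integral_rpow_mul_exp_neg_mul_Ioi (by positivity) (by positivity)]
    congr 1
    unfold cn; ring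
  · have hmeas : AEStronglyMeasurable (Function.uncurry fun (ξ : EuclideanSpace ℝ (Fin n)) (u : ℝ) =>
        (Real.exp (-u) * (Real.pi * u) ^ (-(1/2 : ℝ)) *
        Real.exp (-((y * ‖ξ‖) ^ 2 / (4 * u))) : ℝ)) (volume.prod (volume.restrict (Set.Ioi 0))) := by
      refine Measurable.aestronglyMeasurable ?_
      unfold Function.uncurry
      fun_prop
    have hi : Integrable (Function.uncurry fun (ξ : EuclideanSpace ℝ (Fin n)) (u : ℝ) =>
        (Real.exp (-u) * (Real.pi * u) ^ (-(1/2 : ℝ)) *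
        Real.exp (-((y * ‖ξ‖) ^ 2 / (4 * u))) : ℝ)) (volume.prod (volume.restrict (Set.Ioi 0))) := by
      rw [integrable_prod_iff hmeas]
      constructor
      · refine ae_of_all _ fun ξ => ?_
        refine Integrable.mono' int_w ?_ ?_
        · refine Measurable.aestronglyMeasurable ?_
          unfold Function.uncurry
          fun_prop
        · filter_upwards [ae_restrict_mem measurableSet_Ioi] with u hu
          simp only [Function.uncurry]
          rw [Real.norm_of_nonneg (hw0 u hu _)]
          have : 0 < u := hu
          refine mul_le_of_le_one_right (by positivity) (Real.exp_le_one_iff.2 ?_)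
          have : 0 ≤ (y * ‖ξ‖) ^ 2 / (4 * u) := by positivity
          linarith
      · refine (int_exp hn hy).congr (ae_of_all _ fun ξ => ?_)
        have : -y * ‖ξ‖ = -|y * ‖ξ‖| := by rw [abs_of_nonneg (by positivity)]; ring
        simp only [this]
        rw [subord]
        refine setIntegral_congr_fun measurableSet_Ioi fun u hu => ?_
        simp only [Function.uncurry]
        rw [Real.norm_of_nonneg (hw0 u hu _)]
    refine hi.norm.mono' ?_ (ae_of_all _ fun p => ?_)
    · have h2 : Continuous (fun p : EuclideanSpace ℝ (Fin n) × ℝ => cexp (2 * Real.pi * I * (⟪x, p.1⟫ : ℝ))) := by fun_prop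
      exact (Complex.continuous_ofReal.comp_aestronglyMeasurable hmeas).mul h2.aestronglyMeasurable
    · simp only [Function.uncurry]
      rw [norm_mul, norm_char, mul_one, norm_real]

lemma slit_aux {z : ℂ} (hz : 0 < z.re) (b : ℝ) : z ^ 2 + (b : ℂ) ^ 2 ≠ 0 := by
  intro h
  have h1 : (z + b * I) * (z - b * I) = 0 := by
    linear_combination h - (b:ℂ)^2 * I_sq
  rcases mul_eq_zero.1 h1 with h2 | h2
  · have := congrArg Complex.re h2; simp at this; linarith
  · have := congrArg Complex.re h2; simp at this; linarith

lemma Gk_sq {n : ℕ} (hn : 1 ≤ n) (x : EuclideanSpace ℝ (Fin n)) {z : ℂ} (hz : 0 < z.re) :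
    Gk x z ^ 2 = (cn n : ℂ) ^ 2 * z ^ 2 / (z ^ 2 + ((2 * Real.pi * ‖x‖ : ℝ) : ℂ) ^ 2) ^ (n + 1) := by
  have hopen : IsOpen {w : ℂ | 0 < w.re} := isOpen_lt continuous_const Complex.continuous_re
  have hf : AnalyticOnNhd ℂ (fun z => Gk x z ^ 2) {w : ℂ | 0 < w.re} := by
    refine DifferentiableOn.analyticOnNhd (fun w hw => ?_) hopen
    exact ((diff_Gk hn x hw).pow 2).differentiableWithinAt
  have hg : AnalyticOnNhd ℂ (fun z => (cn n : ℂ) ^ 2 * z ^ 2 / (z ^ 2 + ((2 * Real.pi * ‖x‖ : ℝ) : ℂ) ^ 2) ^ (n + 1)) {w : ℂ | 0 < w.re} := by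
    refine DifferentiableOn.analyticOnNhd (fun w hw => ?_) hopen
    refine DifferentiableAt.differentiableWithinAt ?_
    exact DifferentiableAt.div (by fun_prop) (by fun_prop) (pow_ne_zero _ (slit_aux hw _))
  have hconn : IsPreconnected {w : ℂ | 0 < w.re} := (convex_halfSpace_re_gt 0).isPreconnected
  refine hf.eqOn_of_preconnected_of_frequently_eq hg hconn (z₀ := 1) (by simp) ?_ hz
  have hreal : ∀ y : ℝ, 0 < y → Gk x y ^ 2 = (cn n : ℂ) ^ 2 * (y : ℂ) ^ 2 / ((y : ℂ) ^ 2 + ((2 * Real.pi * ‖x‖ : ℝ) : ℂ) ^ 2) ^ (n + 1) := by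
    intro y hy
    rw [Gk_real hn x hy]
    norm_cast
    rw [mul_pow, ← Real.rpow_natCast (_ ^ _) 2, ← Real.rpow_mul (by positivity),
      show (((n + 1 : ℕ) : ℝ) / 2 * ((2 : ℕ) : ℝ)) = ((n + 1 : ℕ) : ℝ) by push_cast; ring, Real.rpow_natCast]
    have : 1 / (1 + 4 * Real.pi ^ 2 * ‖x‖ ^ 2 / y ^ 2) = y ^ 2 / (y ^ 2 + (2 * Real.pi * ‖x‖) ^ 2) := by
      field_simp
      ring
    rw [this, div_pow, mul_pow]
    field_simp
    ring
  have ht : Tendsto (fun k : ℕ => (((1 + 1 / ((k : ℝ) + 1) : ℝ)) : ℂ)) atTop (𝓝[≠] 1) := by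
    rw [tendsto_nhdsWithin_iff]
    constructor
    · have := (tendsto_one_div_add_atTop_nhds_zero_nat (𝕜 := ℝ)).const_add 1
      rw [add_zero] at this
      exact (Complex.continuous_ofReal.tendsto 1).comp this
    · refine Eventually.of_forall fun k => ?_
      simp only [Set.mem_compl_iff, Set.mem_singleton_iff]
      norm_cast
      have : 0 < 1 / ((k + 1 : ℕ) : ℝ) := by positivity
      intro h; linarith
  refine ht.frequently (Eventually.of_forall fun k => hreal _ (by positivity)).frequently

lemma norm_one_sub (θ : ℝ) : (1 + |θ|) / 2 ≤ ‖(1 - θ * I : ℂ)‖ := by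
  have h1 := Complex.abs_re_le_norm (1 - θ * I : ℂ)
  have h2 := Complex.abs_im_le_norm (1 - θ * I : ℂ)
  simp at h1 h2
  linarith

lemma D_bound (θ ρ : ℝ) (hρ : 0 ≤ ρ) :
    (1 + ρ) ^ 2 / (1 + |θ|) / 4 ≤ ‖(1 - θ * I : ℂ) ^ 2 + (ρ : ℂ) ^ 2‖ ∧
    (1 + |θ|) / 4 ≤ ‖(1 - θ * I : ℂ) ^ 2 + (ρ : ℂ) ^ 2‖ := by
  have e : (1 - θ * I : ℂ) ^ 2 + (ρ : ℂ) ^ 2 = (1 - ((θ - ρ : ℝ) : ℂ) * I) * (1 - ((θ + ρ : ℝ) : ℂ) * I) := by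
    push_cast
    linear_combination (ρ:ℂ)^2 * I_sq
  have h : ((1 + |θ - ρ|) / 2) * ((1 + |θ + ρ|) / 2) ≤ ‖(1 - θ * I : ℂ) ^ 2 + (ρ : ℂ) ^ 2‖ := by
    rw [e, norm_mul]
    gcongr
    · exact norm_one_sub _
    · exact norm_one_sub _
  have key : (1 + |(|θ| - ρ)|) * (1 + (|θ| + ρ)) = (1 + |θ - ρ|) * (1 + |θ + ρ|) := by
    rcases le_total 0 θ with h0 | h0
    · rw [abs_of_nonneg h0, abs_of_nonneg (add_nonneg h0 hρ)]
    · rw [abs_of_nonpos h0, show |-θ - ρ| = |θ + ρ| by rw [← abs_neg]; ring_nf,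
        abs_of_nonpos (show θ - ρ ≤ 0 by linarith)]
      ring
  have hθ := abs_nonneg θ
  have h3 := abs_nonneg (|θ| - ρ)
  have h4 := neg_abs_le (|θ| - ρ)
  constructor
  · refine le_trans ?_ h
    have : (1 + ρ) ^ 2 / (1 + |θ|) ≤ (1 + |θ - ρ|) * (1 + |θ + ρ|) := by
      rw [← key, div_le_iff₀ (by positivity)]
      have : 1 + ρ ≤ (1 + |(|θ| - ρ)|) * (1 + |θ|) := by nlinarith
      nlinarith [mul_nonneg (show 0 ≤ (1 + |(|θ| - ρ)|) * (1 + |θ|) by positivity) hθ]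
    linarith
  · refine le_trans ?_ h
    have : (1 + |θ|) ≤ (1 + |θ - ρ|) * (1 + |θ + ρ|) := by
      rw [← key]; nlinarith
    linarith

lemma Gk_bound {n : ℕ} (hn : 1 ≤ n) {a : ℝ} (ha : (n : ℝ) ≤ a) (ha' : a ≤ n + 1)
    (x : EuclideanSpace ℝ (Fin n)) {t : ℝ} (ht : 0 < t) (θ : ℝ) :
    ‖Gk x (t * (1 - θ * I))‖ ≤ |cn n| * 2 ^ (n + 1) * (1 + |θ|) ^ a * ((t ^ n)⁻¹ * (1 + ‖x‖ / t) ^ (-a)) := by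
  have hn' : (1 : ℝ) ≤ n := by exact_mod_cast hn
  have hre : 0 < ((t : ℂ) * (1 - θ * I)).re := by simp [ht]
  have hsq := Gk_sq hn x hre
  set ρ := 2 * Real.pi * ‖x‖ / t with hρd
  have hρ : 0 ≤ ρ := by positivity
  have hρx : 1 + ‖x‖ / t ≤ 1 + ρ := by
    rw [hρd]
    have : (1:ℝ) ≤ 2 * Real.pi := by linarith [Real.pi_gt_three]
    gcongr
    nlinarith [norm_nonneg x]
  have hθ : 1 ≤ 1 + |θ| := by linarith [abs_nonneg θ]
  set D := ‖(1 - θ * I : ℂ) ^ 2 + (ρ : ℂ) ^ 2‖ with hD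
  obtain ⟨d1, d2⟩ := D_bound θ ρ hρ
  rw [← hD] at d1 d2
  have hDpos : 0 < D := lt_of_lt_of_le (by positivity) d2
  have hz : ‖(1 - θ * I : ℂ)‖ ≤ 1 + |θ| := by
    refine (norm_sub_le _ _).trans ?_
    simp
  have hn2 : ‖Gk x (t * (1 - θ * I))‖ ^ 2 = (|cn n| * (t ^ n)⁻¹) ^ 2 * (‖(1 - θ * I : ℂ)‖ ^ 2 / D ^ (n + 1)) := by
    rw [← norm_pow, hsq]
    have e : ((t : ℂ) * (1 - θ * I)) ^ 2 + ((2 * Real.pi * ‖x‖ : ℝ) : ℂ) ^ 2 = (t : ℂ) ^ 2 * ((1 - θ * I : ℂ) ^ 2 + (ρ : ℂ) ^ 2) := by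
      have : ((2 * Real.pi * ‖x‖ : ℝ) : ℂ) = t * ρ := by
        rw [hρd]; norm_cast; field_simp
      rw [this]; ring
    rw [e]
    simp only [norm_div, norm_mul, norm_pow, norm_real, Real.norm_eq_abs, abs_of_pos ht, mul_pow, ← hD]
    field_simp
    ring
  have hlow : (1 + ρ) ^ (2 * a) * (1 + |θ|) ^ (2 - 2 * a) / 4 ^ (n + 1) ≤ D ^ (n + 1) := by
    have s1 : D ^ (n + 1) = D ^ a * D ^ ((n : ℝ) + 1 - a) := by
      rw [← Real.rpow_add hDpos, ← Real.rpow_natCast]; congr 1; push_cast; ring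
    have s4 : (4 : ℝ) ^ (n + 1) = 4 ^ a * 4 ^ ((n : ℝ) + 1 - a) := by
      rw [← Real.rpow_add (by norm_num), ← Real.rpow_natCast]; congr 1; push_cast; ring
    have s2 : ((1 + ρ) ^ 2 / (1 + |θ|) / 4) ^ a * ((1 + |θ|) / 4) ^ ((n : ℝ) + 1 - a) ≤ D ^ (n + 1) := by
      rw [s1]
      have : 0 ≤ (n : ℝ) + 1 - a := by linarith
      have : 0 ≤ a := by linarith
      gcongr
    refine le_trans ?_ s2
    rw [Real.div_rpow (by positivity) (by positivity), Real.div_rpow (by positivity) (by positivity),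
      Real.div_rpow (by positivity) (by positivity), s4, ← Real.rpow_natCast (1 + ρ) 2, ← Real.rpow_mul (by positivity)]
    have s5 : (1 + ρ) ^ (((2 : ℕ) : ℝ) * a) / (1 + |θ|) ^ a * (1 + |θ|) ^ ((n : ℝ) + 1 - a) =
        (1 + ρ) ^ (2 * a) * (1 + |θ|) ^ ((n : ℝ) + 1 - a - a) := by
      rw [Real.rpow_sub (by positivity) ((n : ℝ) + 1 - a) a]; push_cast; ring
    rw [div_mul_div_comm, s5]
    have s6 : (1 + |θ|) ^ (2 - 2 * a) ≤ (1 + |θ|) ^ ((n : ℝ) + 1 - a - a) :=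
      Real.rpow_le_rpow_of_exponent_le hθ (by linarith)
    gcongr ?_ * ?_ / _
  have hp1 : (0:ℝ) < 1 + ρ := by positivity
  have hp2 : (0:ℝ) < 1 + |θ| := by positivity
  have hfin : ‖Gk x (t * (1 - θ * I))‖ ≤ |cn n| * 2 ^ (n + 1) * (1 + |θ|) ^ a * ((t ^ n)⁻¹ * (1 + ρ) ^ (-a)) := by
    refine abs_le_of_sq_le_sq' ?_ (by positivity) |>.2
    rw [hn2]
    have : ‖(1 - θ * I : ℂ)‖ ^ 2 / D ^ (n + 1) ≤ (2 ^ (n + 1) * (1 + |θ|) ^ a * (1 + ρ) ^ (-a)) ^ 2 := by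
      calc _ ≤ (1 + |θ|) ^ 2 / ((1 + ρ) ^ (2 * a) * (1 + |θ|) ^ (2 - 2 * a) / 4 ^ (n + 1)) := by gcongr
        _ = _ := by
          rw [Real.rpow_sub hp2, Real.rpow_neg hp1.le, mul_comm 2 a, Real.rpow_mul hp1.le, Real.rpow_mul hp2.le]
          rw [show (4:ℝ) ^ (n + 1) = (2 ^ (n + 1)) ^ 2 by rw [← pow_mul, mul_comm, pow_mul]; norm_num]
          simp only [Real.rpow_two]
          field_simp
    calc _ ≤ (|cn n| * (t ^ n)⁻¹) ^ 2 * (2 ^ (n + 1) * (1 + |θ|) ^ a * (1 + ρ) ^ (-a)) ^ 2 := by gcongr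
      _ = _ := by ring
  refine hfin.trans ?_
  have : (1 + ρ) ^ (-a) ≤ (1 + ‖x‖ / t) ^ (-a) :=
    Real.rpow_le_rpow_of_nonpos (by positivity) hρx (by linarith)
  gcongr

lemma conv_formula {n : ℕ} (hn : 1 ≤ n) (f : SchwartzMap (EuclideanSpace ℝ (Fin n)) ℂ)
    (x : EuclideanSpace ℝ (Fin n)) {z : ℂ} (hz : 0 < z.re) :
    ∫ ξ : EuclideanSpace ℝ (Fin n), cexp (-z * ‖ξ‖) * (𝓕 (⇑f) ξ * cexp (2 * Real.pi * I * (⟪x, ξ⟫ : ℝ))) =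
      ∫ y, f y * Gk (x - y) z := by
  have h := (VectorFourier.integral_fourierIntegral_smul_eq_flip (L := innerₗ (EuclideanSpace ℝ (Fin n)))
    Real.continuous_fourierChar continuous_inner (f.integrable (μ := volume)) (int_Gk hn x hz))
  have e1 : ∫ ξ : EuclideanSpace ℝ (Fin n), cexp (-z * ‖ξ‖) * (𝓕 (⇑f) ξ * cexp (2 * Real.pi * I * (⟪x, ξ⟫ : ℝ))) =
      ∫ ξ, VectorFourier.fourierIntegral 𝐞 volume (innerₗ (EuclideanSpace ℝ (Fin n))) (⇑f) ξ •
        (cexp (-z * ‖ξ‖) * cexp (2 * Real.pi * I * (⟪x, ξ⟫ : ℝ))) := by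
    congr 1; ext ξ
    rw [smul_eq_mul, show VectorFourier.fourierIntegral 𝐞 volume (innerₗ (EuclideanSpace ℝ (Fin n))) (⇑f) ξ = 𝓕 (⇑f) ξ from rfl]
    ring
  rw [e1, h]
  congr 1; ext y
  rw [smul_eq_mul]
  congr 1
  unfold VectorFourier.fourierIntegral Gk
  congr 1; ext ξ
  rw [Circle.smul_def, Real.fourierChar_apply, smul_eq_mul, inner_sub_left]
  simp only [LinearMap.flip_apply, innerₗ_apply_apply]
  rw [← Complex.exp_add, ← Complex.exp_add, ← Complex.exp_add]
  congr 1
  push_cast; ring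

noncomputable def Cmax (n : ℕ) (a : ℝ) : ℝ≥0∞ :=
  ENNReal.ofReal (2 ^ a) * volume (Metric.ball (0 : EuclideanSpace ℝ (Fin n)) 1) *
    ∑' k : ℕ, ENNReal.ofReal ((2 ^ (-(a - n)) : ℝ) ^ k)

lemma Cmax_lt (n : ℕ) (a : ℝ) (ha : (n : ℝ) < a) : Cmax n a < ⊤ := by
  unfold Cmax
  refine ENNReal.mul_lt_top (ENNReal.mul_lt_top ENNReal.ofReal_lt_top measure_ball_lt_top) ?_
  rw [← ENNReal.ofReal_tsum_of_nonneg (fun k => by positivity)]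
  · exact ENNReal.ofReal_lt_top
  · refine summable_geometric_of_lt_one (by positivity) ?_
    exact Real.rpow_lt_one_of_one_lt_of_neg (by norm_num) (by linarith)

lemma max_bound {n : ℕ} (hn : 1 ≤ n) {a : ℝ} (ha : (n : ℝ) < a) (f : EuclideanSpace ℝ (Fin n) → ℂ)
    (hf : Measurable f) (x : EuclideanSpace ℝ (Fin n)) {t : ℝ} (ht : 0 < t) :
    ∫⁻ y, ‖f y‖ₑ * ENNReal.ofReal ((t ^ n)⁻¹ * (1 + ‖x - y‖ / t) ^ (-a)) ≤
      Cmax n a * uncenteredMaximal n f x := by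
  have := nontriv hn
  have ha0 : 0 ≤ a := (Nat.cast_nonneg n).trans ha.le
  have hpt : ∀ y, ‖f y‖ₑ * ENNReal.ofReal ((t ^ n)⁻¹ * (1 + ‖x - y‖ / t) ^ (-a)) ≤
      ∑' k : ℕ, ENNReal.ofReal ((t ^ n)⁻¹ * (2 ^ a * (2 ^ (-a)) ^ k)) *
        (Metric.ball x (2 ^ k * t)).indicator (fun y => ‖f y‖ₑ) y := by
    intro y
    obtain ⟨k, hk1, hk2⟩ := exists_nat_pow_near (x := 1 + ‖x - y‖ / t) (y := 2)
      (by have : 0 ≤ ‖x - y‖ / t := by positivity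
          linarith) one_lt_two
    refine le_trans ?_ (ENNReal.le_tsum (k + 1))
    have hmem : y ∈ Metric.ball x (2 ^ (k + 1) * t) := by
      rw [Metric.mem_ball, dist_comm, dist_eq_norm]
      have : ‖x - y‖ / t < 2 ^ (k + 1) := by linarith
      rwa [div_lt_iff₀ ht] at this
    rw [Set.indicator_of_mem hmem, mul_comm]
    gcongr
    calc (1 + ‖x - y‖ / t) ^ (-a) ≤ ((2:ℝ) ^ k) ^ (-a) :=
          Real.rpow_le_rpow_of_nonpos (by positivity) hk1 (by linarith)
      _ = 2 ^ a * (2 ^ (-a)) ^ (k + 1) := by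
          rw [pow_succ, ← Real.rpow_natCast, ← Real.rpow_mul (by norm_num), mul_comm (k : ℝ), Real.rpow_mul (by norm_num),
            Real.rpow_natCast]
          rw [mul_comm, mul_assoc, ← Real.rpow_add (by norm_num)]
          simp
  refine (lintegral_mono hpt).trans ?_
  rw [lintegral_tsum (fun k => ((hf.enorm.indicator measurableSet_ball).const_mul _).aemeasurable)]
  unfold Cmax
  rw [mul_assoc, mul_comm (∑' k : ℕ, _) (uncenteredMaximal n f x), ← mul_assoc, ← ENNReal.tsum_mul_left]
  refine ENNReal.tsum_le_tsum fun k => ?_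
  rw [lintegral_const_mul _ (hf.enorm.indicator measurableSet_ball), lintegral_indicator measurableSet_ball]
  have hr : 0 < 2 ^ k * t := by positivity
  have hM : (∫⁻ y in Metric.ball x (2 ^ k * t), ‖f y‖ₑ) ≤
      uncenteredMaximal n f x * volume (Metric.ball x (2 ^ k * t)) := by
    rw [← ENNReal.div_le_iff (Metric.measure_ball_pos volume x hr).ne' measure_ball_lt_top.ne]
    unfold uncenteredMaximal
    exact le_iSup_of_le x (le_iSup_of_le (2 ^ k * t) (le_iSup_of_le hr (le_iSup_of_le (Metric.mem_ball_self hr) le_rfl)))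
  refine (mul_le_mul_right hM _).trans ?_
  rw [Measure.addHaar_ball volume x hr.le, finrank_euclideanSpace_fin]
  have : ENNReal.ofReal ((t ^ n)⁻¹ * (2 ^ a * (2 ^ (-a)) ^ k)) * ENNReal.ofReal ((2 ^ k * t) ^ n) =
      ENNReal.ofReal (2 ^ a) * ENNReal.ofReal ((2 ^ (-(a - n)) : ℝ) ^ k) := by
    rw [← ENNReal.ofReal_mul (by positivity), ← ENNReal.ofReal_mul (by positivity)]
    congr 1
    rw [show -(a - (n : ℝ)) = -a + n by ring, Real.rpow_add (by norm_num), Real.rpow_natCast]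
    rw [mul_pow, mul_pow, ← pow_mul, ← pow_mul, mul_comm k n]
    field_simp
  calc _ = (ENNReal.ofReal ((t ^ n)⁻¹ * (2 ^ a * (2 ^ (-a)) ^ k)) * ENNReal.ofReal ((2 ^ k * t) ^ n)) *
        volume (Metric.ball (0 : EuclideanSpace ℝ (Fin n)) 1) * uncenteredMaximal n f x := by ring
    _ ≤ _ := by rw [this]; exact le_of_eq (by ring)

lemma T_bound {n : ℕ} (hn : 1 ≤ n) {a : ℝ} (ha : (n : ℝ) < a) (ha' : a ≤ n + 1)
    (f : SchwartzMap (EuclideanSpace ℝ (Fin n)) ℂ)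
    (x : EuclideanSpace ℝ (Fin n)) {t : ℝ} (ht : 0 < t) (θ : ℝ) :
    ‖∫ ξ : EuclideanSpace ℝ (Fin n), cexp (-(t * (1 - θ * I)) * ‖ξ‖) *
      (𝓕 (⇑f) ξ * cexp (2 * Real.pi * I * (⟪x, ξ⟫ : ℝ)))‖ₑ ≤
    ENNReal.ofReal (|cn n| * 2 ^ (n + 1)) * Cmax n a * uncenteredMaximal n f x * ENNReal.ofReal ((1 + |θ|) ^ a) := by
  have hre : 0 < ((t : ℂ) * (1 - θ * I)).re := by simp [ht]
  rw [conv_formula hn f x hre]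
  refine (enorm_integral_le_lintegral_enorm _).trans ?_
  calc _ ≤ ∫⁻ y, ENNReal.ofReal (|cn n| * 2 ^ (n + 1) * (1 + |θ|) ^ a) *
          (‖f y‖ₑ * ENNReal.ofReal ((t ^ n)⁻¹ * (1 + ‖x - y‖ / t) ^ (-a))) := by
        refine lintegral_mono fun y => ?_
        simp only [enorm_mul]
        rw [mul_left_comm, ← ENNReal.ofReal_mul (by positivity), ← ofReal_norm (Gk _ _)]
        gcongr
        exact Gk_bound hn ha.le ha' _ ht θ
    _ ≤ ENNReal.ofReal (|cn n| * 2 ^ (n + 1) * (1 + |θ|) ^ a) * (Cmax n a * uncenteredMaximal n f x) := by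
        rw [lintegral_const_mul' _ _ ENNReal.ofReal_ne_top]
        gcongr
        exact max_bound hn ha f f.continuous.measurable x ht
    _ = _ := by rw [ENNReal.ofReal_mul (by positivity)]; ring

lemma fub {n : ℕ} {H : ℝ → ℂ} (hH : Integrable H) {φ : EuclideanSpace ℝ (Fin n) → ℂ}
    (hφ : Integrable φ) (t : ℝ) :
    ∫ ξ, (∫ τ : ℝ, H τ * cexp (2 * Real.pi * I * (τ * (t * ‖ξ‖) : ℝ))) * φ ξ =
      ∫ τ : ℝ, H τ * ∫ ξ, cexp (2 * Real.pi * I * (τ * (t * ‖ξ‖) : ℝ)) * φ ξ := by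
  simp_rw [← integral_mul_const, ← integral_const_mul]
  rw [integral_integral_swap]
  · congr 1; ext τ; congr 1; ext ξ; ring
  · refine ((hφ.mul_prod hH).norm).mono' ?_ (ae_of_all _ fun p => ?_)
    · have hc : Continuous (fun p : EuclideanSpace ℝ (Fin n) × ℝ => cexp (2 * Real.pi * I * (p.2 * (t * ‖p.1‖) : ℝ))) := by
        fun_prop
      exact (hH.aestronglyMeasurable.comp_snd.mul hc.aestronglyMeasurable).mul hφ.aestronglyMeasurable.comp_fst
    · simp only [Function.uncurry]
      rw [norm_mul, norm_mul, norm_char, norm_mul, mul_one, mul_comm]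

lemma fub_bound {n : ℕ} {H : ℝ → ℂ} (hH : Integrable H) {φ : EuclideanSpace ℝ (Fin n) → ℂ}
    (hφ : Integrable φ) (t : ℝ) (A : ℝ≥0∞) (w : ℝ → ℝ≥0∞) (hw : Measurable w) (hHm : Measurable H)
    (hb : ∀ τ : ℝ, ‖∫ ξ, cexp (2 * Real.pi * I * (τ * (t * ‖ξ‖) : ℝ)) * φ ξ‖ₑ ≤ A * w τ) :
    ‖∫ ξ, (∫ τ : ℝ, H τ * cexp (2 * Real.pi * I * (τ * (t * ‖ξ‖) : ℝ))) * φ ξ‖ₑ ≤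
      A * ∫⁻ τ, ‖H τ‖ₑ * w τ := by
  rw [fub hH hφ t]
  refine (enorm_integral_le_lintegral_enorm _).trans ?_
  rw [← lintegral_const_mul _ (by fun_prop)]
  refine lintegral_mono fun τ => ?_
  rw [enorm_mul, mul_left_comm]
  gcongr
  exact hb τ

lemma inv_ae {m : ℝ → ℂ} (hm : Integrable m) (hm' : Integrable (𝓕 m)) :
    ∀ᵐ l : ℝ, m l = ∫ τ : ℝ, 𝓕 m τ * cexp (2 * Real.pi * I * (τ * l : ℝ)) := by
  have hcont : Continuous (𝓕⁻ (𝓕 m)) :=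
    VectorFourier.fourierIntegral_continuous Real.continuous_fourierChar
      (by simpa using! continuous_inner.neg) hm'
  have h : ∀ᵐ l : ℝ, m l = 𝓕⁻ (𝓕 m) l := by
    refine ae_eq_of_integral_contDiff_smul_eq hm.locallyIntegrable hcont.locallyIntegrable ?_
    intro g hg hgc
    have hgc' : HasCompactSupport (fun x => (g x : ℂ)) := hgc.comp_left (g := fun r : ℝ => (r : ℂ)) (by simp)
    have hg' : ContDiff ℝ (⊤ : ℕ∞) (fun x => (g x : ℂ)) := Complex.ofRealCLM.contDiff.comp hg
    let G : SchwartzMap ℝ ℂ := hgc'.toSchwartzMap hg'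
    have hG : ∀ x, G x = (g x : ℂ) := fun x => rfl
    have e1 : ∫ x, 𝓕⁻ (𝓕 m) x • G x = ∫ x, 𝓕 m x • 𝓕⁻ (⇑G) x := by
      have := (VectorFourier.integral_fourierIntegral_smul_eq_flip (L := -innerₗ ℝ)
        Real.continuous_fourierChar (by simpa using! continuous_inner.neg) hm' (G.integrable (μ := volume)))
      rw [show (-innerₗ ℝ : ℝ →ₗ[ℝ] ℝ →ₗ[ℝ] ℝ).flip = -innerₗ ℝ by ext; simp] at this
      exact this
    have e2 : ∫ x, 𝓕 m x • 𝓕⁻ (⇑G) x = ∫ x, m x • 𝓕 (𝓕⁻ (⇑G)) x := by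
      have := (VectorFourier.integral_fourierIntegral_smul_eq_flip (L := innerₗ ℝ)
        Real.continuous_fourierChar continuous_inner hm ((𝓕⁻ G).integrable (μ := volume)))
      rw [show (innerₗ ℝ : ℝ →ₗ[ℝ] ℝ →ₗ[ℝ] ℝ).flip = innerₗ ℝ by ext; simp] at this
      rw [SchwartzMap.fourierInv_coe] at this
      exact this
    have e3 : 𝓕 (𝓕⁻ (⇑G)) = ⇑G := by
      rw [← SchwartzMap.fourierInv_coe, ← SchwartzMap.fourier_coe]
      simp
    rw [e2, e3] at e1
    simp only [hG, smul_eq_mul] at e1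
    simp only [real_smul]
    simp_rw [mul_comm (g _ : ℂ)]
    exact e1.symm
  filter_upwards [h] with l hl
  rw [hl, Real.fourierInv_eq]
  congr 1; ext τ
  rw [Circle.smul_def, Real.fourierChar_apply, smul_eq_mul, mul_comm]
  congr 2
  simp; ring

lemma lift_null {n : ℕ} (hn : 1 ≤ n) {P : ℝ → Prop} (hP : ∀ᵐ l : ℝ, P l) {t : ℝ} (ht : 0 < t) :
    ∀ᵐ ξ : EuclideanSpace ℝ (Fin n), P (t * ‖ξ‖) := by
  classical
  have := nontriv hn
  have hP' : ∀ᵐ l : ℝ, P (t * l) := by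
    have hq : Measure.QuasiMeasurePreserving (fun l : ℝ => t * l) volume volume := by
      refine ⟨by fun_prop, ?_⟩
      rw [Real.map_volume_mul_left ht.ne']
      exact Measure.smul_absolutelyContinuous
    exact hq.ae hP
  let F : ℝ → ℝ := fun r => if P (t * r) then 0 else 1
  have hF0 : ∀ᵐ r : ℝ, F r = 0 := by
    filter_upwards [hP'] with r hr
    simp [F, hr]
  have hz : ∀ᵐ r ∂(volume.restrict (Set.Ioi (0:ℝ))), r ^ (Module.finrank ℝ (EuclideanSpace ℝ (Fin n)) - 1) • F r = 0 := by
    filter_upwards [ae_restrict_of_ae hF0] with r hr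
    simp [hr]
  have hint : Integrable (fun ξ : EuclideanSpace ℝ (Fin n) => F ‖ξ‖) := by
    rw [integrable_fun_norm_addHaar volume]
    exact (integrable_zero _ _ _).congr (hz.mono fun r hr => hr.symm)
  have hval : ∫ ξ : EuclideanSpace ℝ (Fin n), F ‖ξ‖ = 0 := by
    rw [integral_fun_norm_addHaar volume, integral_congr_ae hz]
    simp
  have hnn : 0 ≤ fun ξ : EuclideanSpace ℝ (Fin n) => F ‖ξ‖ := by
    intro ξ; simp only [F]; split_ifs <;> simp
  have := (integral_eq_zero_iff_of_nonneg hnn hint).1 hval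
  filter_upwards [this] with ξ hξ
  by_contra hc
  simp [F, hc] at hξ

lemma exists_g : ∃ g : SchwartzMap ℝ ℂ, ∀ l : ℝ, |l| ≤ 2 → g l = cexp l := by
  let b : ContDiffBump (0 : ℝ) := ⟨2, 3, by norm_num, by norm_num⟩
  have h1 : HasCompactSupport (fun l : ℝ => (b l : ℂ) * cexp l) :=
    (b.hasCompactSupport.comp_left (g := fun r : ℝ => (r : ℂ)) (by simp)).mul_right
  have h2 : ContDiff ℝ (⊤ : ℕ∞) (fun l : ℝ => (b l : ℂ) * cexp l) :=
    (Complex.ofRealCLM.contDiff.comp b.contDiff).mul (Complex.ofRealCLM.contDiff.cexp)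
  refine ⟨h1.toSchwartzMap h2, fun l hl => ?_⟩
  change (b l : ℂ) * cexp l = _
  rw [b.one_of_mem_closedBall (by simpa using hl)]
  simp

lemma weight_schwartz (g : SchwartzMap ℝ ℂ) (N : ℕ) {a : ℝ} (ha : a ≤ N) :
    ∫⁻ σ, ‖g σ‖ₑ * ENNReal.ofReal ((1 + |2 * Real.pi * σ|) ^ a) < ⊤ := by
  have hi : Integrable (fun σ : ℝ => 2 ^ (N - 1) * (‖g σ‖ + (2 * Real.pi) ^ N * (‖σ‖ ^ N * ‖g σ‖))) :=
    ((g.integrable (μ := volume)).norm.add ((g.integrable_pow_mul volume N).const_mul _)).const_mul _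
  refine lt_of_le_of_lt (lintegral_mono fun σ => ?_) hi.lintegral_lt_top
  rw [← ofReal_norm, ← ENNReal.ofReal_mul (norm_nonneg _)]
  refine ENNReal.ofReal_le_ofReal ?_
  have h1 : (1:ℝ) ≤ 1 + |2 * Real.pi * σ| := by linarith [abs_nonneg (2 * Real.pi * σ)]
  have h2 : (1 + |2 * Real.pi * σ|) ^ a ≤ (1 + |2 * Real.pi * σ|) ^ N := by
    rw [← Real.rpow_natCast]
    exact Real.rpow_le_rpow_of_exponent_le h1 ha
  have h3 := add_pow_le (zero_le_one (α := ℝ)) (abs_nonneg (2 * Real.pi * σ)) N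
  calc _ ≤ ‖g σ‖ * (2 ^ (N - 1) * (1 ^ N + |2 * Real.pi * σ| ^ N)) := by gcongr; exact h2.trans h3
    _ = _ := by
      rw [abs_mul, abs_of_pos Real.two_pi_pos, Real.norm_eq_abs σ, mul_pow]
      ring

noncomputable def Csob (a s : ℝ) : ℝ≥0∞ :=
  ENNReal.ofReal |(2 * Real.pi)⁻¹| *
    (∫⁻ θ : ℝ, (ENNReal.ofReal (2 ^ a * (1 + θ ^ 2) ^ ((a - s) / 2))) ^ (2:ℝ)) ^ (1 / 2 : ℝ)

lemma Csob_lt {a s : ℝ} (h : a + 1 / 2 < s) : Csob a s < ⊤ := by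
  unfold Csob
  refine ENNReal.mul_lt_top ENNReal.ofReal_lt_top (ENNReal.rpow_lt_top_of_nonneg (by norm_num) ?_)
  have hi := (integrable_rpow_neg_one_add_norm_sq (E := ℝ) (μ := volume) (r := 2 * (s - a))
    (by simp; linarith)).const_mul ((2 ^ a) ^ 2)
  refine (lt_of_le_of_lt (lintegral_mono fun θ => ?_) hi.lintegral_lt_top).ne
  rw [ENNReal.ofReal_rpow_of_nonneg (by positivity) (by norm_num)]
  refine ENNReal.ofReal_le_ofReal (le_of_eq ?_)
  rw [Real.rpow_two, mul_pow, ← Real.rpow_natCast ((1 + θ ^ 2) ^ ((a - s) / 2)), ← Real.rpow_mul (by positivity),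
    Real.norm_eq_abs, sq_abs]
  congr 2
  push_cast; ring

lemma weight_sob {a s : ℝ} (ha : 0 ≤ a) {m : ℝ → ℂ} (hm : Integrable m) :
    ∫⁻ τ, ‖𝓕 m τ‖ₑ * ENNReal.ofReal ((1 + |2 * Real.pi * τ|) ^ a) ≤ Csob a s * sobolevW2 s m := by
  set Fh : ℝ → ℂ := fun τ => ∫ l : ℝ, m l * Complex.exp (-(Complex.I * l * τ)) with hFh
  have hF : ∀ τ, 𝓕 m τ = Fh (2 * Real.pi * τ) := by
    intro τ
    rw [Real.fourier_real_eq]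
    simp only [hFh]
    congr 1; ext l
    rw [Circle.smul_def, Real.fourierChar_apply, smul_eq_mul, mul_comm]
    congr 2
    push_cast; ring
  have hcF : Continuous (𝓕 m) :=
    VectorFourier.fourierIntegral_continuous Real.continuous_fourierChar continuous_inner hm
  have hc : Continuous Fh := by
    have : Fh = fun θ => 𝓕 m ((2 * Real.pi)⁻¹ * θ) := by
      ext θ; rw [hF]; congr 1; field_simp
    rw [this]; fun_prop
  simp_rw [hF]
  have hcv : ∫⁻ τ : ℝ, ‖Fh (2 * Real.pi * τ)‖ₑ * ENNReal.ofReal ((1 + |2 * Real.pi * τ|) ^ a) =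
      ENNReal.ofReal |(2 * Real.pi)⁻¹| * ∫⁻ θ : ℝ, ‖Fh θ‖ₑ * ENNReal.ofReal ((1 + |θ|) ^ a) := by
    rw [← smul_eq_mul (ENNReal.ofReal |(2 * Real.pi)⁻¹|), ← lintegral_smul_measure (ENNReal.ofReal |(2 * Real.pi)⁻¹|) (fun θ => ‖Fh θ‖ₑ * ENNReal.ofReal ((1 + |θ|) ^ a)),
      ← Real.map_volume_mul_left (a := 2 * Real.pi) (by positivity),
      lintegral_map (by fun_prop) (by fun_prop)]
  rw [hcv]
  unfold Csob
  rw [mul_assoc]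
  gcongr
  have hcs := ENNReal.lintegral_mul_le_Lp_mul_Lq volume (p := 2) (q := 2) Real.HolderConjugate.two_two
    (f := fun θ : ℝ => ENNReal.ofReal (2 ^ a * (1 + θ ^ 2) ^ ((a - s) / 2)))
    (g := fun θ : ℝ => ENNReal.ofReal ((1 + θ ^ 2) ^ (s / 2)) * ‖Fh θ‖ₑ) (by fun_prop) (by fun_prop)
  refine le_trans ?_ (hcs.trans (le_of_eq ?_))
  · refine lintegral_mono fun θ => ?_
    simp only [Pi.mul_apply]
    rw [← mul_assoc, mul_comm, ← ENNReal.ofReal_mul (by positivity)]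
    gcongr
    rw [mul_assoc, ← Real.rpow_add (by positivity), show (a - s) / 2 + s / 2 = 2⁻¹ * a by ring,
      Real.rpow_mul (by positivity), ← Real.mul_rpow (by positivity) (by positivity)]
    gcongr
    rw [show (2⁻¹ : ℝ) = 1 / 2 by norm_num, ← Real.sqrt_eq_rpow]
    refine abs_le_of_sq_le_sq' ?_ (by positivity) |>.2
    rw [mul_pow, Real.sq_sqrt (by positivity)]
    nlinarith [sq_abs θ, sq_nonneg (|θ| - 1)]
  · congr 1
    unfold sobolevW2
    congr 1
    refine lintegral_congr fun θ => ?_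
    rw [ENNReal.mul_rpow_of_nonneg _ _ (by norm_num), ENNReal.ofReal_rpow_of_nonneg (by positivity) (by norm_num),
      ← Real.rpow_mul (by positivity), ENNReal.rpow_two]
    congr 3
    ring

theorem multiplier_pointwise_maximal_bound (n : ℕ) (hn : 1 ≤ n) (s : ℝ)
    (hs : (n : ℝ) + 1 / 2 < s) :
    ∃ C : ℝ, 0 < C ∧ ∀ m : ℝ → ℂ, Measurable m → (∃ M : ℝ, ∀ l : ℝ, ‖m l‖ ≤ M) →
      (∀ l : ℝ, 2 < |l| → m l = 0) → sobolevW2 s m < ⊤ →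
      ∀ f : SchwartzMap (EuclideanSpace ℝ (Fin n)) ℂ, ∀ t : ℝ, 0 < t →
        ∀ x : EuclideanSpace ℝ (Fin n),
          ENNReal.ofReal ‖∫ ξ : EuclideanSpace ℝ (Fin n),
              m (t * ‖ξ‖) * 𝓕 (⇑f) ξ * Complex.exp (2 * Real.pi * Complex.I * (⟪x, ξ⟫ : ℝ))‖
            ≤ ENNReal.ofReal C * sobolevW2 s m * uncenteredMaximal n (⇑f) x := by
  obtain ⟨a, ha, ha1, has⟩ : ∃ a : ℝ, (n : ℝ) < a ∧ a ≤ n + 1 ∧ a + 1 / 2 < s := by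
    refine ⟨min (n + 1) ((n + (s - 1/2)) / 2), lt_min (by linarith) (by linarith), min_le_left _ _, ?_⟩
    have := min_le_right ((n : ℝ) + 1) ((n + (s - 1/2)) / 2)
    linarith
  have ha0 : 0 ≤ a := (Nat.cast_nonneg n).trans ha.le
  obtain ⟨g, hg⟩ := exists_g
  set Ig := ∫⁻ σ, ‖(𝓕 g) σ‖ₑ * ENNReal.ofReal ((1 + |2 * Real.pi * σ|) ^ a) with hIg
  have hIg_lt : Ig < ⊤ := weight_schwartz (𝓕 g) (n + 1) (by push_cast; exact ha1)
  set K := ENNReal.ofReal (|cn n| * 2 ^ (n + 1)) * Cmax n a * Ig * Csob a s with hK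
  have hK_lt : K < ⊤ := ENNReal.mul_lt_top (ENNReal.mul_lt_top (ENNReal.mul_lt_top ENNReal.ofReal_lt_top
    (Cmax_lt n a ha)) hIg_lt) (Csob_lt has)
  refine ⟨K.toReal + 1, by positivity, ?_⟩
  intro m hmm ⟨M, hM⟩ hsupp hsob f t ht x
  have hKC : K ≤ ENNReal.ofReal (K.toReal + 1) := by
    rw [← ENNReal.ofReal_toReal hK_lt.ne]
    refine ENNReal.ofReal_le_ofReal ?_
    rw [ENNReal.ofReal_toReal hK_lt.ne]
    linarith
  -- integrability of m
  have hmint : Integrable m := by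
    have h1 : IntegrableOn m (Set.Icc (-2) 2) :=
      Measure.integrableOn_of_bounded (M := M) (by simp) hmm.aestronglyMeasurable (ae_of_all _ hM)
    refine (integrableOn_iff_integrable_of_support_subset ?_).1 h1
    intro l hl
    by_contra hc
    refine hl (hsupp l ?_)
    rw [← not_le, abs_le]
    exact hc
  have hws := weight_sob (a := a) (s := s) ha0 hmint
  have hcF : Continuous (𝓕 m) :=
    VectorFourier.fourierIntegral_continuous Real.continuous_fourierChar continuous_inner hmint
  have hFint : Integrable (𝓕 m) := by
    refine ⟨hcF.aestronglyMeasurable, ?_⟩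
    refine lt_of_le_of_lt (le_trans (lintegral_mono fun τ => ?_) hws) (ENNReal.mul_lt_top (Csob_lt has) hsob)
    refine le_mul_of_one_le_right zero_le ?_
    rw [ENNReal.one_le_ofReal]
    exact Real.one_le_rpow (by linarith [abs_nonneg (2 * Real.pi * τ)]) ha0
  have hinv := lift_null hn (inv_ae hmint hFint) ht
  have hginv : ∀ l : ℝ, g l = ∫ τ : ℝ, (𝓕 g) τ * cexp (2 * Real.pi * I * (τ * l : ℝ)) := by
    intro l
    have : g l = (𝓕⁻ (𝓕 g)) l := by simp
    rw [this, SchwartzMap.fourierInv_coe, Real.fourierInv_eq]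
    congr 1; ext τ
    rw [Circle.smul_def, Real.fourierChar_apply, smul_eq_mul, mul_comm]
    congr 2
    simp; ring
  set φ0 : EuclideanSpace ℝ (Fin n) → ℂ := fun ξ => 𝓕 (⇑f) ξ * cexp (2 * Real.pi * I * (⟪x, ξ⟫ : ℝ)) with hφ0
  have hφ0c : Continuous φ0 := by
    have : Continuous (𝓕 (⇑f)) := by rw [← SchwartzMap.fourier_coe]; exact (𝓕 f).continuous
    fun_prop
  have hφ0i : Integrable φ0 := by
    have : Integrable (𝓕 (⇑f)) := by rw [← SchwartzMap.fourier_coe]; exact (𝓕 f).integrable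
    refine this.norm.mono' hφ0c.aestronglyMeasurable (ae_of_all _ fun ξ => ?_)
    simp only [hφ0]
    rw [norm_mul, norm_char, mul_one]
  -- the damped functions
  have hdamp : ∀ τ : ℝ, Integrable (fun ξ : EuclideanSpace ℝ (Fin n) =>
      cexp (2 * Real.pi * I * (τ * (t * ‖ξ‖) : ℝ)) * (cexp (-(t * ‖ξ‖ : ℝ)) * φ0 ξ)) := by
    intro τ
    refine hφ0i.norm.mono' (Continuous.aestronglyMeasurable (by fun_prop)) (ae_of_all _ fun ξ => ?_)
    rw [norm_mul, norm_char, one_mul, norm_mul, norm_exp]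
    refine mul_le_of_le_one_left (norm_nonneg _) (Real.exp_le_one_iff.2 ?_)
    rw [neg_re, ofReal_re]
    have : 0 ≤ t * ‖ξ‖ := by positivity
    linarith
  set A0 := ENNReal.ofReal (|cn n| * 2 ^ (n + 1)) * Cmax n a * uncenteredMaximal n f x with hA0
  set φ1 : EuclideanSpace ℝ (Fin n) → ℂ := fun ξ => g (t * ‖ξ‖) * (cexp (-(t * ‖ξ‖ : ℝ)) * φ0 ξ) with hφ1
  have hφ1i : Integrable φ1 := by
    obtain ⟨B, hB⟩ : ∃ B, ∀ l, ‖g l‖ ≤ B := by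
      obtain ⟨B, -, hB⟩ := g.decay 0 0
      exact ⟨B, by simpa using hB⟩
    have h0 := hdamp 0
    simp only [zero_mul, ofReal_zero, mul_zero, Complex.exp_zero, one_mul] at h0
    exact h0.bdd_mul (c := B) (Continuous.aestronglyMeasurable (by fun_prop)) (ae_of_all _ fun ξ => hB _)
  -- inner estimate
  have hinner : ∀ τ : ℝ, ‖∫ ξ, cexp (2 * Real.pi * I * (τ * (t * ‖ξ‖) : ℝ)) * φ1 ξ‖ₑ ≤
      (A0 * Ig) * ENNReal.ofReal ((1 + |2 * Real.pi * τ|) ^ a) := by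
    intro τ
    have e : ∫ ξ, cexp (2 * Real.pi * I * (τ * (t * ‖ξ‖) : ℝ)) * φ1 ξ =
        ∫ ξ, (∫ σ : ℝ, (𝓕 g) σ * cexp (2 * Real.pi * I * (σ * (t * ‖ξ‖) : ℝ))) *
          (cexp (2 * Real.pi * I * (τ * (t * ‖ξ‖) : ℝ)) * (cexp (-(t * ‖ξ‖ : ℝ)) * φ0 ξ)) := by
      congr 1; ext ξ
      rw [← hginv]
      simp only [hφ1]; ring
    rw [e]
    refine (fub_bound (𝓕 g).integrable (hdamp τ) t (A0 * ENNReal.ofReal ((1 + |2 * Real.pi * τ|) ^ a))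
      (fun σ => ENNReal.ofReal ((1 + |2 * Real.pi * σ|) ^ a)) (by fun_prop) (𝓕 g).continuous.measurable ?_).trans
      (le_of_eq ?_)
    · intro σ
      have e2 : ∀ ξ : EuclideanSpace ℝ (Fin n), cexp (2 * Real.pi * I * (σ * (t * ‖ξ‖) : ℝ)) *
          (cexp (2 * Real.pi * I * (τ * (t * ‖ξ‖) : ℝ)) * (cexp (-(t * ‖ξ‖ : ℝ)) * φ0 ξ)) =
          cexp (-(t * (1 - ((2 * Real.pi * (τ + σ) : ℝ) : ℂ) * I)) * ‖ξ‖) * φ0 ξ := by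
        intro ξ
        rw [← mul_assoc, ← mul_assoc, ← Complex.exp_add, ← Complex.exp_add]
        congr 2
        push_cast; ring
      simp_rw [e2]
      refine (T_bound hn ha ha1 f x ht _).trans ?_
      rw [← hA0, mul_assoc A0 (ENNReal.ofReal _), ← ENNReal.ofReal_mul (by positivity), ← Real.mul_rpow (by positivity) (by positivity)]
      gcongr
      have h1 := abs_add_le (2 * Real.pi * τ) (2 * Real.pi * σ)
      rw [mul_add]
      nlinarith [mul_nonneg (abs_nonneg (2 * Real.pi * τ)) (abs_nonneg (2 * Real.pi * σ))]
    · rw [← hIg]; ring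
  have houter := fub_bound hFint hφ1i t (A0 * Ig) _ (by fun_prop) hcF.measurable hinner
  have heq : ∫ ξ : EuclideanSpace ℝ (Fin n),
      m (t * ‖ξ‖) * 𝓕 (⇑f) ξ * Complex.exp (2 * Real.pi * Complex.I * (⟪x, ξ⟫ : ℝ)) =
      ∫ ξ, (∫ τ : ℝ, 𝓕 m τ * cexp (2 * Real.pi * I * (τ * (t * ‖ξ‖) : ℝ))) * φ1 ξ := by
    refine integral_congr_ae ?_
    filter_upwards [hinv] with ξ hξ
    rw [← hξ]
    simp only [hφ1, hφ0]
    by_cases hle : |t * ‖ξ‖| ≤ 2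
    · rw [hg _ hle, ← mul_assoc (cexp _) (cexp _), ← Complex.exp_add]
      simp [mul_assoc]
    · rw [hsupp _ (not_le.1 hle)]
      simp
  rw [heq, ofReal_norm]
  refine houter.trans ((mul_le_mul_right hws _).trans ?_)
  calc _ = K * sobolevW2 s m * uncenteredMaximal n f x := by rw [hA0, hK]; ring
    _ ≤ _ := by gcongr
end
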